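/- arXiv:2006.09608 — 6 statements merged into one kernel-verified Lean document; each statement's English description precedes it below -/
import Mathlib

section
/- The space cl T(I) has the strongly discrete approaching property (SDAP): for every continuous map ε : cl T(I) → (0,1), every compact metric space K, and every continuous map f : K × ℕ → cl T(I), there exists a continuous map g : K × ℕ → cl T(I) such that the family of sets {g(K × {n}) : n ∈ ℕ} is discrete in cl T(I) (every point of cl T(I) has a neighborhood meeting g(K × {n}) for at most one n) and d(f(k,n), g(k,n)) < ε(f(k,n)) for every (k,n) ∈ K × ℕ. -/
/-!
The approximations are zigzags. For `φ` in the closure of the transitive maps, an amplitude `a` and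
a large `N`, the map `zig N φ a` is piecewise linear with nodes `i / N`, with the value
`φ (i / N) + a` at even nodes and `φ (i / N) - a` at odd nodes, truncated to `[0, 1]`. It depends
continuously on `φ` and `a`, and has the following properties as soon as `φ` varies by at most
`a / 4` at scale `1 / N` and `a * N ≥ 16`.

* It is within `5 a / 4` of `φ` (`dist_zig`) and jumps by at least `a / 2` between the nodes `0` and
  `1 / N` (`zig_gap`).
* It is transitive (`zig_transitive`). All its laps are steep, so the iterates of any interval
  eventually contain a full lap (`exists_lap_subset`). The image of a lap contains the
  `a / 2`-neighbourhood in `[0, 1]` of the image of that lap under `φ` (`height_cover`), so it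
  contains every lap met by the image under any transitive `h` close enough to `φ`. Orbits of `h`
  from that lap to the target open set are therefore realised by the zigzag.

Given `f` and `ε`, take `g (k, n) = zig (S n) (f (k, n)) (ε (f (k, n)) / 2)`. By compactness of `K`
one value `S n` serves all `k`, and it can be taken so large that the earlier compact families
`g (K × {m})`, `m < n`, are too equicontinuous to have the jump of the maps in `g (K × {n})`: the
families are pairwise disjoint. They are also locally finite. If some `g (k, n)` with `n` arbitrarily
large came arbitrarily close to `x`, the amplitudes `ε (f (k, n)) / 2` could not tend to `0`, since
then `f (k, n)` would approach `x` too, while `ε x > 0`; so `x` would have jumps bounded below at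
arbitrarily small scales, contradicting continuity. Disjointness and local finiteness of compact
sets give discreteness.
-/

open unitInterval

/-- A continuous self-map of the unit interval is (topologically) transitive if for every pair
of nonempty open sets `U, V ⊆ I` there is a positive integer `n` with `U ∩ f⁻ⁿ(V) ≠ ∅`. -/
def IsTransitiveMap (f : C(I, I)) : Prop :=
  ∀ U V : Set I, IsOpen U → IsOpen V → U.Nonempty → V.Nonempty →
    ∃ n : ℕ, 0 < n ∧ (U ∩ (f : I → I)^[n] ⁻¹' V).Nonempty

/-- `T(I)`: the set of transitive maps in `C(I, I)`. -/
def TransSet : Set C(I, I) := {f | IsTransitiveMap f}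

/-! ### Piecewise linear interpolation and laps -/

/-- The tent function of height one supported on `[-1, 1]`. -/
noncomputable def hat (t : ℝ) : ℝ := max 0 (1 - |t|)

/-- The piecewise linear interpolation of the heights `v 0, …, v N` at the nodes `i / N`,
written as a sum of tents, so that its joint continuity in `x` and in the heights is immediate. -/
noncomputable def pl (N : ℕ) (v : ℕ → ℝ) (x : ℝ) : ℝ :=
  ∑ i ∈ Finset.range (N + 1), v i * hat (N * x - i)

/-- The `i`-th lap `[i / N, (i + 1) / N]`, written without division. -/
def lap (N i : ℕ) : Set ℝ := {x | (i : ℝ) ≤ N * x ∧ N * x ≤ i + 1}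

lemma pl_lap {N i : ℕ} (hi : i < N) (v : ℕ → ℝ) {x : ℝ} (hx : x ∈ lap N i) :
    pl N v x = v i * (i + 1 - N * x) + v (i + 1) * (N * x - i) := by
  obtain ⟨h1, h2⟩ := hx
  unfold pl
  rw [Finset.sum_eq_add i (i + 1) (by omega)]
  · have e1 : hat (N * x - i) = i + 1 - N * x := by
      unfold hat
      rw [abs_of_nonneg (by linarith), max_eq_right (by linarith)]; ring
    have e2 : hat (N * x - (i + 1 : ℕ)) = N * x - i := by
      unfold hat
      push_cast
      rw [abs_of_nonpos (by linarith), max_eq_right (by linarith)]; ring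
    rw [e1, e2]
  · rintro j - ⟨hj1, hj2⟩
    have : hat (N * x - j) = 0 := by
      unfold hat
      apply max_eq_left
      rcases lt_or_gt_of_ne hj1 with h | h
      · have : (j : ℝ) + 1 ≤ i := by exact_mod_cast h
        linarith [le_abs_self (N * x - j)]
      · have : (i : ℝ) + 2 ≤ j := by exact_mod_cast (by omega : i + 2 ≤ j)
        linarith [neg_le_abs (N * x - j)]
    rw [this, mul_zero]
  · intro h; exact absurd (Finset.mem_range.2 (by omega)) h
  · intro h; exact absurd (Finset.mem_range.2 (by omega)) h

lemma continuous_pl (N : ℕ) (v : ℕ → ℝ) : Continuous (pl N v) := by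
  unfold pl hat; fun_prop

lemma exists_lap {N : ℕ} (hN : 0 < N) {x : ℝ} (h0 : 0 ≤ x) (h1 : x ≤ 1) :
    ∃ i < N, x ∈ lap N i := by
  have hN' : (0 : ℝ) < N := by exact_mod_cast hN
  rcases h1.eq_or_lt with rfl | h1
  · refine ⟨N - 1, by omega, ?_⟩
    have : ((N - 1 : ℕ) : ℝ) = N - 1 := by rw [Nat.cast_sub hN]; simp
    constructor <;> rw [this] <;> linarith
  · have hx : 0 ≤ N * x := by positivity
    refine ⟨⌊N * x⌋₊, ?_, Nat.floor_le hx, (Nat.lt_floor_add_one _).le⟩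
    rw [Nat.floor_lt hx]; nlinarith

lemma lap_subset {N i : ℕ} (hi : i < N) : lap N i ⊆ Set.Icc 0 1 := by
  rintro x ⟨h1, h2⟩
  have hN' : (0 : ℝ) < N := by exact_mod_cast (by omega : 0 < N)
  have hi' : (i : ℝ) + 1 ≤ N := by exact_mod_cast hi
  have hi0 : (0 : ℝ) ≤ i := by positivity
  constructor
  · by_contra! h; nlinarith
  · by_contra! h; nlinarith

lemma lap_eq {N i : ℕ} (hN : 0 < N) : lap N i = Set.uIcc ((i : ℝ) / N) ((i + 1 : ℕ) / N) := by
  have hN' : (0 : ℝ) < N := by exact_mod_cast hN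
  rw [Set.uIcc_of_le (by gcongr; omega)]
  ext x
  simp only [lap, Set.mem_ofPred_eq, Set.mem_Icc, div_le_iff₀ hN', le_div_iff₀ hN']
  push_cast
  rw [mul_comm x]

/-! ### Expansion of intervals -/

/-- One step of the expansion: an interval either contains a full lap or its image contains an
interval twice as long, since at most one node lies inside it and the longer of the two parts is
stretched at least four times. -/
lemma expand_step {N : ℕ} (hN : 0 < N) {G : ℝ → ℝ} (hG : Continuous G)
    (hexp : ∀ i < N, ∀ x ∈ lap N i, ∀ y ∈ lap N i, 4 * |x - y| ≤ |G x - G y|)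
    {c d : ℝ} (hc : 0 ≤ c) (hcd : c < d) (hd : d ≤ 1) :
    (∃ i < N, lap N i ⊆ Set.Icc c d) ∨
      ∃ c' d', 2 * (d - c) ≤ d' - c' ∧ Set.Icc c' d' ⊆ G '' Set.Icc c d := by
  have hN' : (0 : ℝ) < N := by exact_mod_cast hN
  have key : ∀ i < N, ∀ x ∈ lap N i, ∀ y ∈ lap N i, x ≤ y → c ≤ x → y ≤ d →
      d - c ≤ 2 * (y - x) → ∃ c' d', 2 * (d - c) ≤ d' - c' ∧
        Set.Icc c' d' ⊆ G '' Set.Icc c d := by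
    intro i hi x hx y hy hxy hcx hyd hl
    refine ⟨min (G x) (G y), max (G x) (G y), ?_, ?_⟩
    · rw [max_sub_min_eq_abs']
      have := hexp i hi x hx y hy
      rw [abs_sub_comm x y, abs_of_nonneg (by linarith : 0 ≤ y - x)] at this
      linarith
    · refine (intermediate_value_uIcc hG.continuousOn).trans (Set.image_mono ?_)
      rw [Set.uIcc_of_le hxy]
      exact Set.Icc_subset_Icc hcx hyd
  have hcN : 0 ≤ N * c := by positivity
  set i := ⌊N * c⌋₊ with hi
  have hi1 : (i : ℝ) ≤ N * c := Nat.floor_le hcN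
  have hi2 : N * c < i + 1 := Nat.lt_floor_add_one _
  have hiN : i < N := by rw [hi, Nat.floor_lt hcN]; nlinarith
  have hcdN : N * c < N * d := by gcongr
  have hdN : N * d ≤ N := by nlinarith
  rcases le_or_gt (N * d) (i + 1) with h | h
  · exact Or.inr (key i hiN c ⟨hi1, hi2.le⟩ d ⟨by linarith, h⟩ hcd.le le_rfl le_rfl (by linarith))
  have hiN2 : i + 1 < N := by
    have : ((i + 1 : ℕ) : ℝ) < N := by push_cast; linarith
    exact_mod_cast this
  rcases le_or_gt ((i : ℝ) + 2) (N * d) with h' | h'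
  · left
    refine ⟨i + 1, hiN2, ?_⟩
    rintro x ⟨hx1, hx2⟩
    push_cast at hx1 hx2
    constructor
    · by_contra! hh; nlinarith
    · by_contra! hh; nlinarith
  right
  -- `p` is the unique node inside `[c, d]`.
  set p : ℝ := (i + 1) / N with hp
  have hpN : N * p = i + 1 := by rw [hp]; field_simp
  have hcp : c ≤ p := by by_contra! hh; nlinarith
  have hpd : p ≤ d := by by_contra! hh; nlinarith
  rcases le_total (d - c) (2 * (p - c)) with h3 | h3
  · exact key i hiN c ⟨hi1, hi2.le⟩ p ⟨by linarith, by linarith⟩ hcp le_rfl hpd h3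
  · refine key (i + 1) hiN2 p ⟨?_, ?_⟩ d ⟨?_, ?_⟩ hpd hcp le_rfl (by linarith) <;>
      push_cast <;> linarith

/-- Lengths of intervals double until a full lap is covered, and they cannot exceed one. -/
lemma exists_lap_subset {N : ℕ} (hN : 0 < N) {G : ℝ → ℝ} (hG : Continuous G)
    (hmap : Set.MapsTo G (Set.Icc 0 1) (Set.Icc 0 1))
    (hexp : ∀ i < N, ∀ x ∈ lap N i, ∀ y ∈ lap N i, 4 * |x - y| ≤ |G x - G y|)
    {c d : ℝ} (hc : 0 ≤ c) (hcd : c < d) (hd : d ≤ 1) :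
    ∃ m, ∃ i < N, lap N i ⊆ G^[m] '' Set.Icc c d := by
  by_contra! hcon
  have hgrow : ∀ m : ℕ, ∃ c' d', 2 ^ m * (d - c) ≤ d' - c' ∧
      Set.Icc c' d' ⊆ G^[m] '' Set.Icc c d := by
    intro m
    induction m with
    | zero => exact ⟨c, d, by simp, by simp⟩
    | succ m ih =>
      obtain ⟨c', d', hl, hs⟩ := ih
      have hlt : c' < d' := by
        have : 0 < 2 ^ m * (d - c) := mul_pos (by positivity) (by linarith)
        linarith
      have hI : Set.Icc c' d' ⊆ Set.Icc 0 1 := hs.trans <| by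
        rintro _ ⟨x, hx, rfl⟩
        exact hmap.iterate m ⟨hc.trans hx.1, hx.2.trans hd⟩
      rcases expand_step hN hG hexp (hI (Set.left_mem_Icc.2 hlt.le)).1 hlt
        (hI (Set.right_mem_Icc.2 hlt.le)).2 with ⟨i, hi, h⟩ | ⟨c'', d'', h1, h2⟩
      · exact absurd (h.trans hs) (hcon m i hi)
      · refine ⟨c'', d'', by rw [pow_succ]; linarith, h2.trans ?_⟩
        rw [Function.iterate_succ', Set.image_comp]
        exact Set.image_mono hs
  obtain ⟨m, hm⟩ := pow_unbounded_of_one_lt (1 / (d - c)) (one_lt_two : (1 : ℝ) < 2)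
  obtain ⟨c', d', hl, hs⟩ := hgrow m
  rw [div_lt_iff₀ (by linarith)] at hm
  have hI : Set.Icc c' d' ⊆ Set.Icc 0 1 := hs.trans <| by
    rintro _ ⟨x, hx, rfl⟩
    exact hmap.iterate m ⟨hc.trans hx.1, hx.2.trans hd⟩
  have h1 := (hI (Set.left_mem_Icc.2 (by linarith))).1
  have h2 := (hI (Set.right_mem_Icc.2 (by linarith : c' ≤ d'))).2
  linarith

/-! ### Zigzag approximations -/

/-- The point `i / N` of `I` (clamped to `1` when `i > N`). -/
noncomputable def node (N i : ℕ) : I := Set.projIcc 0 1 zero_le_one ((i : ℝ) / N)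

/-- The height of the zigzag at `i / N`: the value of `φ` there, raised by `a` at even nodes and
lowered by `a` at odd ones, truncated to `[0, 1]`. -/
noncomputable def height (N : ℕ) (φ : C(I, I)) (a : ℝ) (i : ℕ) : ℝ :=
  if Even i then min 1 (φ (node N i) + a) else max 0 (φ (node N i) - a)

/-- The zigzag approximation of `φ` of amplitude `a` with `N` laps. The interpolation already takes
values in `[0, 1]` when `0 ≤ a`; the projection makes it a self-map of `I` for every `a`. -/
noncomputable def zig (N : ℕ) (φ : C(I, I)) (a : ℝ) : C(I, I) where
  toFun x := Set.projIcc 0 1 zero_le_one (pl N (height N φ a) x)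
  continuous_toFun :=
    continuous_projIcc.comp ((continuous_pl _ _).comp continuous_subtype_val)

lemma continuous_zig (N : ℕ) : Continuous fun p : C(I, I) × ℝ => zig N p.1 p.2 := by
  apply ContinuousMap.continuous_of_continuous_uncurry
  refine (continuous_projIcc (h := zero_le_one (α := ℝ))).comp
    (g := Set.projIcc 0 1 zero_le_one) (f := fun p : (C(I, I) × ℝ) × I =>
      pl N (height N p.1.1 p.1.2) p.2) ?_
  unfold pl hat
  refine continuous_finsetSum _ fun i _ => Continuous.mul ?_ (by fun_prop)
  unfold height
  split_ifs <;> fun_prop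

lemma node_coe {N i : ℕ} (hi : i ≤ N) : (node N i : ℝ) = i / N := by
  unfold node
  rw [Set.projIcc_of_mem zero_le_one
    (x := (i : ℝ) / N) ⟨by positivity, div_le_one_of_le₀ (by exact_mod_cast hi) (by positivity)⟩]

section single

variable {N : ℕ} {φ : C(I, I)} {a : ℝ}

lemma height_mem (ha : 0 < a) (i : ℕ) : height N φ a i ∈ Set.Icc (0 : ℝ) 1 := by
  have h := (φ (node N i)).2
  unfold height
  split_ifs
  · exact ⟨le_min zero_le_one (by linarith [h.1]), min_le_left _ _⟩
  · exact ⟨le_max_left _ _, max_le zero_le_one (by linarith [h.2])⟩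

lemma height_near (ha : 0 < a) (i : ℕ) : |height N φ a i - φ (node N i)| ≤ a := by
  have h := (φ (node N i)).2
  unfold height
  rw [abs_le]
  split_ifs
  · rcases min_cases 1 ((φ (node N i) : ℝ) + a) with h' | h' <;> constructor <;>
      linarith [h.1, h.2]
  · rcases max_cases 0 ((φ (node N i) : ℝ) - a) with h' | h' <;> constructor <;>
      linarith [h.1, h.2]

lemma pl_mem (hN : 0 < N) (ha : 0 < a) {x : ℝ} (hx : x ∈ Set.Icc (0 : ℝ) 1) :
    pl N (height N φ a) x ∈ Set.Icc (0 : ℝ) 1 := by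
  obtain ⟨i, hi, hxi⟩ := exists_lap hN hx.1 hx.2
  rw [pl_lap hi _ hxi]
  obtain ⟨h1, h2⟩ := hxi
  have u := height_mem (N := N) (φ := φ) ha i
  have w := height_mem (N := N) (φ := φ) ha (i + 1)
  constructor
  · exact add_nonneg (mul_nonneg u.1 (by linarith)) (mul_nonneg w.1 (by linarith))
  · nlinarith [u.2, w.2]

lemma zig_coe (hN : 0 < N) (ha : 0 < a) (x : I) :
    (zig N φ a x : ℝ) = pl N (height N φ a) x := by
  change ((Set.projIcc 0 1 zero_le_one (pl N (height N φ a) x) : I) : ℝ) = _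
  rw [Set.projIcc_of_mem zero_le_one (pl_mem hN ha x.2)]

lemma node_dist {i j : ℕ} (hi : i < N) (hj : j = i ∨ j = i + 1) {x : I} (hx : (x : ℝ) ∈ lap N i) :
    |(node N j : ℝ) - x| ≤ 1 / N := by
  have hN' : (0 : ℝ) < N := by exact_mod_cast (by omega : 0 < N)
  obtain ⟨h1, h2⟩ := hx
  rw [node_coe (by omega), le_div_iff₀ hN']
  have : |(j : ℝ) / N - x| * N = |(j : ℝ) - N * (x : ℝ)| := by
    rw [← abs_of_pos hN', ← abs_mul, abs_of_pos hN']
    congr 1; field_simp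
  rw [this, abs_le]
  rcases hj with rfl | rfl <;> push_cast <;> constructor <;> linarith

variable (hmod : ∀ x y : I, |(x : ℝ) - y| ≤ 1 / N → |(φ x : ℝ) - φ y| ≤ a / 4)

include hmod in
lemma dist_zig (hN : 0 < N) (ha : 0 < a) : dist φ (zig N φ a) ≤ 5 * a / 4 := by
  rw [ContinuousMap.dist_le (by positivity)]
  intro x
  obtain ⟨i, hi, hxi⟩ := exists_lap hN x.2.1 x.2.2
  rw [Subtype.dist_eq, Real.dist_eq, zig_coe hN ha, pl_lap hi _ hxi]
  have h1 := abs_le.1 (hmod _ _ (node_dist hi (Or.inl rfl) hxi))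
  have h2 := abs_le.1 (hmod _ _ (node_dist hi (Or.inr rfl) hxi))
  have h3 := abs_le.1 (height_near (N := N) (φ := φ) ha i)
  have h4 := abs_le.1 (height_near (N := N) (φ := φ) ha (i + 1))
  obtain ⟨h5, h6⟩ := hxi
  rw [abs_le]
  constructor <;> nlinarith

include hmod in
/-- The heights at the ends of a lap lie on opposite sides of the strip of radius `a / 2` around
the values of `φ` on that lap. -/
lemma height_cover {i : ℕ} (hi : i < N) {x : I} (hx : (x : ℝ) ∈ lap N i) :
    Set.Icc ((φ x : ℝ) - a / 2) (φ x + a / 2) ∩ Set.Icc 0 1 ⊆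
      Set.uIcc (height N φ a i) (height N φ a (i + 1)) := by
  rintro y ⟨⟨hy1, hy2⟩, hy3, hy4⟩
  have h1 := abs_le.1 (hmod _ _ (node_dist hi (Or.inl rfl) hx))
  have h2 := abs_le.1 (hmod _ _ (node_dist hi (Or.inr rfl) hx))
  unfold height
  by_cases he : Even i
  · rw [if_pos he, if_neg (by simpa [Nat.even_add_one] using he)]
    exact Set.Icc_subset_uIcc' ⟨max_le hy3 (by linarith), le_min hy4 (by linarith)⟩
  · rw [if_neg he, if_pos (by simpa [Nat.even_add_one] using he)]
    exact Set.Icc_subset_uIcc ⟨max_le hy3 (by linarith), le_min hy4 (by linarith)⟩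

include hmod in
lemma height_gap (ha : 0 < a) (ha1 : a ≤ 1) {i : ℕ} (hi : i < N) :
    a / 2 ≤ |height N φ a (i + 1) - height N φ a i| := by
  have hx : (node N i : ℝ) ∈ lap N i := by
    have hN' : (0 : ℝ) < N := by exact_mod_cast (by omega : 0 < N)
    rw [lap, Set.mem_ofPred_eq, node_coe hi.le, mul_div_cancel₀ _ hN'.ne']
    constructor <;> linarith
  have hc := height_cover hmod hi hx
  have h := (φ (node N i)).2
  -- A subinterval of length `a / 2` of the strip that stays inside `[0, 1]`.
  have hsub : ∃ s, 0 ≤ s ∧ s + a / 2 ≤ 1 ∧ (φ (node N i) : ℝ) - a / 2 ≤ s ∧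
      s ≤ φ (node N i) := by
    rcases le_total (φ (node N i) : ℝ) (1 / 2) with h' | h'
    · exact ⟨φ (node N i), h.1, by linarith, by linarith, le_rfl⟩
    · exact ⟨φ (node N i) - a / 2, by linarith, by linarith [h.2], le_rfl, by linarith⟩
  obtain ⟨s, hs0, hs1, hs2, hs3⟩ := hsub
  have A := hc (show s ∈ _ from ⟨⟨hs2, by linarith⟩, hs0, by linarith⟩)
  have B := hc (show s + a / 2 ∈ _ from ⟨⟨by linarith, by linarith⟩, by linarith, hs1⟩)
  have := Set.abs_sub_le_of_uIcc_subset_uIcc (Set.uIcc_subset_uIcc A B)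
  rwa [add_sub_cancel_left, abs_of_pos (by linarith)] at this

include hmod in
/-- The first lap forces a jump of size `a / 2` at scale `1 / N`. -/
lemma zig_gap (hN : 0 < N) (ha : 0 < a) (ha1 : a ≤ 1) :
    a / 2 ≤ |(zig N φ a (node N 1) : ℝ) - zig N φ a (node N 0)| := by
  have hN' : (0 : ℝ) < N := by exact_mod_cast hN
  have h := height_gap hmod ha ha1 hN
  have e0 : (node N 0 : ℝ) = 0 := by rw [node_coe (by omega)]; simp
  have e1 : (node N 1 : ℝ) = 1 / N := by rw [node_coe (by omega)]; simp
  have e2 : (N : ℝ) * (1 / N) = 1 := by field_simp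
  rw [zig_coe hN ha, zig_coe hN ha, e0, e1, pl_lap hN _ (x := 0) (by simp [lap]),
    pl_lap hN _ (x := 1 / N) (by constructor <;> rw [e2] <;> simp), e2]
  simpa using h

include hmod in
/-- For a limit `φ` of transitive maps, a fine enough zigzag is transitive. Expansion carries any
interval onto a lap; from there the zigzag shadows the orbits of a transitive map `h` close to
`φ`, because the image of a lap contains the laps met by the image of that lap under `h`. -/
lemma zig_transitive (hφ : φ ∈ closure TransSet) (ha : 0 < a) (ha1 : a ≤ 1)
    (hN : 16 ≤ a * N) : IsTransitiveMap (zig N φ a) := by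
  have hN0 : 0 < N := by
    rcases Nat.eq_zero_or_pos N with rfl | h
    · norm_num at hN
    · exact h
  have hN' : (0 : ℝ) < N := by exact_mod_cast hN0
  set G := pl N (height N φ a) with hGdef
  have hG : Continuous G := continuous_pl _ _
  have hmap : Set.MapsTo G (Set.Icc 0 1) (Set.Icc 0 1) := fun x hx => pl_mem hN0 ha hx
  have hsemi : ∀ (m : ℕ) (x : I), (((zig N φ a : I → I)^[m] x : I) : ℝ) = G^[m] x := by
    intro m x
    exact (Function.Semiconj.iterate_right
      (f := (Subtype.val : I → ℝ)) (fun y => zig_coe hN0 ha y) m) x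
  have hexp : ∀ i < N, ∀ x ∈ lap N i, ∀ y ∈ lap N i, 4 * |x - y| ≤ |G x - G y| := by
    intro i hi x hx y hy
    rw [hGdef, pl_lap hi _ hx, pl_lap hi _ hy]
    have : height N φ a i * (i + 1 - N * x) + height N φ a (i + 1) * (N * x - i) -
        (height N φ a i * (i + 1 - N * y) + height N φ a (i + 1) * (N * y - i)) =
        (height N φ a (i + 1) - height N φ a i) * N * (x - y) := by ring
    rw [this, abs_mul, abs_mul, abs_of_pos hN']
    have := height_gap hmod ha ha1 hi
    have h8 : 4 ≤ |height N φ a (i + 1) - height N φ a i| * N := by nlinarith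
    exact mul_le_mul_of_nonneg_right h8 (abs_nonneg _)
  have hcover : ∀ i < N, ∀ x : I, (x : ℝ) ∈ lap N i →
      Set.Icc ((φ x : ℝ) - a / 2) (φ x + a / 2) ∩ Set.Icc 0 1 ⊆ G '' lap N i := by
    intro i hi x hx
    refine (height_cover hmod hi hx).trans ?_
    have hl := lap_eq (i := i) hN0
    have e1 : G ((i : ℝ) / N) = height N φ a i := by
      have hm : (i : ℝ) / N ∈ lap N i := by rw [hl]; exact Set.left_mem_uIcc
      rw [hGdef, pl_lap hi _ hm, mul_div_cancel₀ _ hN'.ne']; ring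
    have e2 : G ((i + 1 : ℕ) / N) = height N φ a (i + 1) := by
      have hm : ((i + 1 : ℕ) : ℝ) / N ∈ lap N i := by rw [hl]; exact Set.right_mem_uIcc
      rw [hGdef, pl_lap hi _ hm, mul_div_cancel₀ _ hN'.ne']; push_cast; ring
    rw [hl, ← e1, ← e2]
    exact intermediate_value_uIcc hG.continuousOn
  intro U V hU hV hUne hVne
  obtain ⟨c, d, hc, hcd, hd, hcdU⟩ : ∃ c d : ℝ, 0 ≤ c ∧ c < d ∧ d ≤ 1 ∧
      ∀ t : I, (t : ℝ) ∈ Set.Icc c d → t ∈ U := by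
    obtain ⟨x, hx⟩ := hUne
    obtain ⟨r, hr, hb⟩ := Metric.isOpen_iff.1 hU x hx
    have hb' : ∀ t : I, |(t : ℝ) - x| < r → t ∈ U := fun t ht => hb (by
      rwa [Metric.mem_ball, Subtype.dist_eq, Real.dist_eq])
    have hm : 0 < min (r / 2) (1 / 2) := by positivity
    have hm1 := min_le_left (r / 2) (1 / 2)
    have hm2 := min_le_right (r / 2) (1 / 2)
    rcases le_total (x : ℝ) (1 / 2) with h | h
    · refine ⟨x, x + min (r / 2) (1 / 2), x.2.1, by linarith, by linarith, fun t ht => hb' t ?_⟩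
      rw [abs_lt]; constructor <;> linarith [ht.1, ht.2]
    · refine ⟨x - min (r / 2) (1 / 2), x, by linarith, by linarith, x.2.2, fun t ht => hb' t ?_⟩
      rw [abs_lt]; constructor <;> linarith [ht.1, ht.2]
  obtain ⟨m, i, hi, hlap⟩ := exists_lap_subset hN0 hG hmap hexp hc hcd hd
  obtain ⟨h, hh, hdist⟩ := Metric.mem_closure_iff.1 hφ (a / 8) (by positivity)
  have hi' : (i : ℝ) + 1 ≤ N := by exact_mod_cast hi
  obtain ⟨n, hn, x, hxU, hxV⟩ := hh
    ((fun x : I => (N : ℝ) * x) ⁻¹' Set.Ioo (i : ℝ) (i + 1)) V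
    (isOpen_Ioo.preimage (by fun_prop)) hV
    (by
      refine ⟨⟨(i + 1 / 2) / N, by positivity, by rw [div_le_one hN']; linarith⟩, ?_, ?_⟩ <;>
        simp only [mul_div_cancel₀ _ hN'.ne'] <;> linarith) hVne
  have hshadow : ∀ j : ℕ, ∃ i' < N, (((h : I → I)^[j] x : I) : ℝ) ∈ lap N i' ∧
      lap N i' ⊆ G^[j] '' lap N i := by
    intro j
    induction j with
    | zero => exact ⟨i, hi, ⟨hxU.1.le, hxU.2.le⟩, by simp⟩
    | succ j ih =>
      obtain ⟨l, hl, hxl, hs⟩ := ih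
      rw [Function.iterate_succ', Function.iterate_succ', Set.image_comp]
      set y := (h : I → I)^[j] x
      obtain ⟨l', hl', hyl'⟩ := exists_lap hN0 (h y).2.1 (h y).2.2
      refine ⟨l', hl', hyl', ?_⟩
      refine Set.Subset.trans ?_ ((hcover l hl y hxl).trans (Set.image_mono hs))
      intro z hz
      refine ⟨?_, lap_subset hl' hz⟩
      have hd1 : |(φ y : ℝ) - h y| < a / 8 := by
        have := (ContinuousMap.dist_apply_le_dist y).trans_lt hdist
        rwa [Subtype.dist_eq, Real.dist_eq] at this
      obtain ⟨hd2, hd3⟩ := abs_lt.1 hd1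
      obtain ⟨z1, z2⟩ := hz
      obtain ⟨y1, y2⟩ := hyl'
      constructor
      · by_contra! hh; nlinarith
      · by_contra! hh; nlinarith
  obtain ⟨l, hl, hxl, hs⟩ := hshadow n
  obtain ⟨w, hw, hwx⟩ := hs hxl
  obtain ⟨t, ht, htw⟩ := hlap hw
  have htI : t ∈ Set.Icc (0 : ℝ) 1 := ⟨hc.trans ht.1, ht.2.trans hd⟩
  refine ⟨n + m, by omega, ⟨t, htI⟩, hcdU _ ht, ?_⟩
  have : (zig N φ a : I → I)^[n + m] ⟨t, htI⟩ = (h : I → I)^[n] x := by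
    apply Subtype.ext
    rw [hsemi, Function.iterate_add_apply, htw, hwx]
  rw [Set.mem_preimage, this]
  exact hxV

end single

/-! ### Choice of scales and discreteness -/

/-- Equicontinuity of a compact family of maps, at scales `1 / N`. -/
lemma exists_scale {K : Type} [MetricSpace K] [CompactSpace K] {F : K → C(I, I)}
    (hF : Continuous F) {c : ℝ} (hc : 0 < c) :
    ∃ N₀ : ℕ, ∀ N ≥ N₀, ∀ k, ∀ x y : I, |(x : ℝ) - y| ≤ 1 / N → |(F k x : ℝ) - F k y| < c := by
  have hu : UniformContinuous fun p : K × I => F p.1 p.2 :=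
    CompactSpace.uniformContinuous_of_continuous (by fun_prop)
  obtain ⟨δ, hδ, h⟩ := Metric.uniformContinuous_iff.1 hu c hc
  obtain ⟨N₀, hN₀⟩ := exists_nat_gt (1 / δ)
  have h0 : (0 : ℝ) < N₀ := lt_trans (by positivity) hN₀
  refine ⟨N₀, fun N hN k x y hxy => ?_⟩
  have hN' : (N₀ : ℝ) ≤ N := by exact_mod_cast hN
  have := @h (k, x) (k, y) (by
    rw [Prod.dist_eq, dist_self, max_eq_right dist_nonneg, Subtype.dist_eq, Real.dist_eq]
    refine hxy.trans_lt ?_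
    rw [div_lt_iff₀ (by linarith)]
    rw [div_lt_iff₀ hδ] at hN₀
    nlinarith)
  rwa [Subtype.dist_eq, Real.dist_eq] at this

/-- A sequence dominating `A` whose `n`-th term also dominates bounds that depend on each of the
earlier terms. -/
def dominating (A : ℕ → ℕ) (B : ℕ → ℕ → ℕ → ℕ) : ℕ → ℕ
  | n => max (A n) (Finset.univ.sup fun m : Fin n => B m (dominating A B m) n)
decreasing_by exact m.isLt

lemma le_dominating (A : ℕ → ℕ) (B : ℕ → ℕ → ℕ → ℕ) (n : ℕ) : A n ≤ dominating A B n := by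
  rw [dominating]; exact le_max_left _ _

lemma bound_le_dominating (A : ℕ → ℕ) (B : ℕ → ℕ → ℕ → ℕ) {m n : ℕ} (h : m < n) :
    B m (dominating A B m) n ≤ dominating A B n := by
  rw [dominating.eq_1 A B n]
  exact le_max_of_le_right
    (Finset.le_sup (f := fun m : Fin n => B m (dominating A B m) n) (Finset.mem_univ ⟨m, h⟩))

theorem closure_transSet_has_SDAP :
    ∀ (ε : ↥(closure TransSet) → ℝ), Continuous ε → (∀ x, ε x ∈ Set.Ioo (0 : ℝ) 1) →
    ∀ (K : Type) [MetricSpace K] [CompactSpace K],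
    ∀ f : K × ℕ → ↥(closure TransSet), Continuous f →
      ∃ g : K × ℕ → ↥(closure TransSet), Continuous g ∧
        (∀ x : ↥(closure TransSet), ∃ U ∈ nhds x, ∀ n m : ℕ,
          (U ∩ Set.range fun k : K => g (k, n)).Nonempty →
          (U ∩ Set.range fun k : K => g (k, m)).Nonempty → n = m) ∧
        (∀ (k : K) (n : ℕ), dist (f (k, n)) (g (k, n)) < ε (f (k, n))) := by
  intro ε hε hε01 K _ _ f hf
  have hpos : ∀ p, 0 < ε (f p) := fun p => (hε01 _).1
  have hlt : ∀ p, ε (f p) < 1 := fun p => (hε01 _).2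
  have hmin : ∀ n, ∃ c > 0, ∀ k, c ≤ ε (f (k, n)) := by
    intro n
    rcases isEmpty_or_nonempty K with h | h
    · exact ⟨1, one_pos, fun k => h.elim k⟩
    · have hc : Continuous fun k => ε (f (k, n)) := by fun_prop
      obtain ⟨k₀, -, hk₀⟩ := isCompact_univ.exists_isMinOn Set.univ_nonempty hc.continuousOn
      exact ⟨ε (f (k₀, n)), hpos _, fun k => hk₀ (Set.mem_univ k)⟩
  choose c hc0 hc using hmin
  -- The amplitude is `ε / 2`: it must be comparable to `ε` for local finiteness, and the factor
  -- absorbs the constant `5 / 4` of `dist_zig`.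
  let Z : ℕ → ℕ → K → C(I, I) := fun n N k => zig N (f (k, n)).1 (ε (f (k, n)) / 2)
  have hZ : ∀ n N, Continuous (Z n N) := fun n N =>
    (continuous_zig N).comp (f := fun k => ((f (k, n)).1, ε (f (k, n)) / 2)) (by fun_prop)
  have hA : ∀ n, ∃ N₀ : ℕ, ∀ N ≥ N₀, ∀ k, ∀ x y : I, |(x : ℝ) - y| ≤ 1 / N →
      |((f (k, n)).1 x : ℝ) - (f (k, n)).1 y| < c n / 8 := fun n =>
    exists_scale (F := fun k => (f (k, n)).1) (by fun_prop) (by linarith [hc0 n])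
  choose A hA using hA
  have hA' : ∀ n, ∃ N₀ : ℕ, 32 / c n < N₀ := fun n => exists_nat_gt _
  choose A' hA' using hA'
  have hB : ∀ m N n, ∃ N₀ : ℕ, ∀ N' ≥ N₀, ∀ k, ∀ x y : I, |(x : ℝ) - y| ≤ 1 / N' →
      |(Z m N k x : ℝ) - Z m N k y| < c n / 4 := fun m N n =>
    exists_scale (hZ m N) (by linarith [hc0 n])
  choose B hB using hB
  set S := dominating (fun n => max (max n 1) (max (A n) (A' n))) B with hS
  have hS0 : ∀ n, max (max n 1) (max (A n) (A' n)) ≤ S n := le_dominating _ B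
  have hSn : ∀ n, n ≤ S n := fun n => le_trans (by simp) (hS0 n)
  have hS1 : ∀ n, 0 < S n := fun n => lt_of_lt_of_le (by simp) (hS0 n)
  have hSA : ∀ n, A n ≤ S n := fun n => le_trans (by simp) (hS0 n)
  have hSA' : ∀ n, A' n ≤ S n := fun n => le_trans (by simp) (hS0 n)
  have hSB : ∀ m n, m < n → B m (S m) n ≤ S n := fun m n h => bound_le_dominating _ B h
  have hmod : ∀ n k, ∀ x y : I, |(x : ℝ) - y| ≤ 1 / S n →
      |((f (k, n)).1 x : ℝ) - (f (k, n)).1 y| ≤ ε (f (k, n)) / 2 / 4 := by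
    intro n k x y hxy
    have := hA n (S n) (hSA n) k x y hxy
    linarith [hc n k]
  have hbig : ∀ n k, 16 ≤ ε (f (k, n)) / 2 * S n := by
    intro n k
    have h1 : 32 / c n < S n := (hA' n).trans_le (by exact_mod_cast hSA' n)
    rw [div_lt_iff₀ (hc0 n)] at h1
    have h2 : (0 : ℝ) ≤ S n := by positivity
    nlinarith [hc n k]
  have hgap : ∀ n k, ε (f (k, n)) / 4 ≤
      |(Z n (S n) k (node (S n) 1) : ℝ) - Z n (S n) k (node (S n) 0)| := by
    intro n k
    have := zig_gap (hmod n k) (hS1 n) (by linarith [hpos (k, n)]) (by linarith [hlt (k, n)])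
    exact le_trans (by linarith) this
  have hnode : ∀ n, |(node (S n) 1 : ℝ) - node (S n) 0| ≤ 1 / S n := by
    intro n
    rw [node_coe (hS1 n), node_coe (Nat.zero_le _)]
    simp
  let g : K × ℕ → ↥(closure TransSet) := fun p => ⟨Z p.2 (S p.2) p.1, subset_closure
    (zig_transitive (hmod p.2 p.1) (f p).2 (by linarith [hpos p]) (by linarith [hlt p])
      (hbig p.2 p.1))⟩
  have hgd : ∀ k n, dist (f (k, n)) (g (k, n)) < ε (f (k, n)) := by
    intro k n
    have := dist_zig (hmod n k) (hS1 n) (by linarith [hpos (k, n)])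
    exact lt_of_le_of_lt this (by linarith [hpos (k, n)])
  have hgn : ∀ n, Continuous fun k => g (k, n) := fun n => (hZ n (S n)).subtype_mk _
  have hdisj : ∀ m n, m < n → ∀ k k', g (k, m) ≠ g (k', n) := by
    intro m n hmn k k' heq
    have h1 := hB m (S m) n (S n) (hSB m n hmn) k _ _ (hnode n)
    have h2 := hgap n k'
    have h3 : Z m (S m) k = Z n (S n) k' := congrArg Subtype.val heq
    rw [h3] at h1
    have h4 := hc n k'
    linarith
  -- Maps `g (k, n)` near `x` have amplitude bounded below, while `x` has small jumps at the
  -- scale `1 / S n` for large `n`.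
  have hfin : ∀ x : ↥(closure TransSet), ∃ r > 0, ∃ M, ∀ n ≥ M, ∀ k, r ≤ dist (g (k, n)) x := by
    intro x
    obtain ⟨δ, hδ, hδε⟩ := Metric.continuous_iff.1 hε x (ε x / 2) (by linarith [(hε01 x).1])
    have hε0 := (hε01 x).1
    set e := min (δ / 2) (ε x / 2) with he
    have he0 : 0 < e := by positivity
    have he1 : e ≤ δ / 2 := min_le_left _ _
    have he2 : e ≤ ε x / 2 := min_le_right _ _
    obtain ⟨M, hM⟩ := exists_scale (K := Unit) (F := fun _ => x.1) continuous_const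
      (c := e / 16) (by positivity)
    refine ⟨e / 16, by positivity, M, fun n hn k => ?_⟩
    by_contra! hcon
    have hef : e ≤ ε (f (k, n)) := by
      by_contra! hlt'
      have h1 : dist (f (k, n)) x < δ := by
        have := dist_triangle (f (k, n)) (g (k, n)) x
        linarith [hgd k n]
      have h2 := hδε _ h1
      rw [Real.dist_eq] at h2
      linarith [(abs_lt.1 h2).1]
    have h1 := hM (S n) (hn.le.trans (hSn n)) () _ _ (hnode n)
    have h2 := hgap n k
    have h3 : ∀ y : I, |(Z n (S n) k y : ℝ) - x.1 y| < e / 16 := by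
      intro y
      have : dist (Z n (S n) k y) (x.1 y) < e / 16 :=
        (ContinuousMap.dist_apply_le_dist y).trans_lt hcon
      rwa [Subtype.dist_eq, Real.dist_eq] at this
    have h4 := abs_lt.1 (h3 (node (S n) 1))
    have h5 := abs_lt.1 (h3 (node (S n) 0))
    have h6 := abs_lt.1 h1
    have h7 : |(Z n (S n) k (node (S n) 1) : ℝ) - Z n (S n) k (node (S n) 0)| < e / 4 := by
      rw [abs_lt]; constructor <;> linarith
    linarith
  refine ⟨g, ?_, ?_, hgd⟩
  · exact continuous_prod_of_discrete_right.2 hgn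
  · intro x
    obtain ⟨r, hr, M, hM⟩ := hfin x
    -- Besides the ball, avoid each of the finitely many earlier compact sets missing `x`.
    refine ⟨Metric.ball x r ∩ ⋂ n ∈ {n | n < M ∧ x ∉ Set.range fun k => g (k, n)},
      (Set.range fun k => g (k, n))ᶜ, ?_, ?_⟩
    · refine Filter.inter_mem (Metric.ball_mem_nhds x hr) ?_
      refine (Filter.biInter_mem ((Set.finite_lt_nat M).subset fun n h => h.1)).2 fun n h => ?_
      exact (isCompact_range (hgn n)).isClosed.isOpen_compl.mem_nhds h.2
    · have hx : ∀ n, ((Metric.ball x r ∩ ⋂ n ∈ {n | n < M ∧ x ∉ Set.range fun k => g (k, n)},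
          (Set.range fun k => g (k, n))ᶜ) ∩ Set.range fun k : K => g (k, n)).Nonempty →
          x ∈ Set.range fun k => g (k, n) := by
        rintro n ⟨_, ⟨hy1, hy2⟩, k, rfl⟩
        by_contra hxn
        have hnM : n < M := by
          by_contra! h
          exact absurd (Metric.mem_ball.1 hy1) (not_lt.2 (hM n h k))
        exact Set.mem_iInter₂.1 hy2 n ⟨hnM, hxn⟩ ⟨k, rfl⟩
      intro n m hn hm
      obtain ⟨k, hk⟩ := hx n hn
      obtain ⟨k', hk'⟩ := hx m hm
      rcases lt_trichotomy n m with h | h | h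
      · exact absurd (hk.trans hk'.symm) (hdisj n m h k k')
      · exact h
      · exact absurd (hk'.trans hk.symm) (hdisj m n h k' k)
end

section
/- The set T(I) of transitive maps is a Gδ subset of C(I), i.e., it is the intersection of countably many open subsets of C(I). -/
/-!
Transitivity only has to be tested on pairs `U, V` taken from a countable basis of `I`. For a fixed
pair, the existence of a positive iterate sending a point of `U` into `V` is an open condition on `f`, because
`f ↦ fⁿ(x)` is continuous on `C(I, I)` for all `n` and `x`. Hence `T(I)` is a countable
intersection of open sets.
-/

open unitInterval

theorem continuous_iterate_apply (n : ℕ) (x : I) :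
    Continuous fun f : C(I, I) => (f : I → I)^[n] x := by
  induction n with
  | zero => exact continuous_const
  | succ n ih =>
    simp only [Function.iterate_succ_apply']
    exact continuous_id.eval ih

theorem isOpen_setOf_exists_iterate (U : Set I) {V : Set I} (hV : IsOpen V) :
    IsOpen {f : C(I, I) | ∃ n : ℕ, 0 < n ∧ (U ∩ (f : I → I)^[n] ⁻¹' V).Nonempty} := by
  have h : {f : C(I, I) | ∃ n : ℕ, 0 < n ∧ (U ∩ (f : I → I)^[n] ⁻¹' V).Nonempty} =
      ⋃ (n : ℕ) (_ : 0 < n) (x ∈ U), (fun f : C(I, I) => (f : I → I)^[n] x) ⁻¹' V := by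
    ext f
    simp only [Set.Nonempty, Set.mem_ofPred_eq, Set.mem_iUnion, Set.mem_inter_iff,
      Set.mem_preimage, exists_prop]
  rw [h]
  exact isOpen_iUnion fun n => isOpen_iUnion fun _ => isOpen_biUnion fun x _ =>
    hV.preimage (continuous_iterate_apply n x)

theorem transSet_isGδ : IsGδ TransSet := by
  have hB := TopologicalSpace.isBasis_countableBasis I
  have hc := TopologicalSpace.countable_countableBasis I
  have h : TransSet = ⋂ U ∈ TopologicalSpace.countableBasis I,
      ⋂ V ∈ TopologicalSpace.countableBasis I,
        {f : C(I, I) | ∃ n : ℕ, 0 < n ∧ (U ∩ (f : I → I)^[n] ⁻¹' V).Nonempty} := by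
    ext f
    simp only [Set.mem_iInter]
    constructor
    · intro hf U hU V hV
      exact hf U V (hB.isOpen hU) (hB.isOpen hV)
        (TopologicalSpace.nonempty_of_mem_countableBasis hU)
        (TopologicalSpace.nonempty_of_mem_countableBasis hV)
    · rintro hf U V hU hV ⟨x, hx⟩ ⟨y, hy⟩
      obtain ⟨U', hU', -, hUU⟩ := hB.exists_subset_of_mem_open hx hU
      obtain ⟨V', hV', -, hVV⟩ := hB.exists_subset_of_mem_open hy hV
      obtain ⟨n, hn, z, hzU, hzV⟩ := hf U' hU' V' hV'
      exact ⟨n, hn, z, hUU hzU, hVV hzV⟩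
  rw [h]
  exact .biInter hc fun U _ => .biInter hc fun V hV =>
    (isOpen_setOf_exists_iterate U (hB.isOpen hV)).isGδ
end

section
/- The space S(I) of all surjective continuous maps from I onto itself, equipped with the supremum metric, is homeomorphic to the separable Hilbert space ℓ₂. -/
/-!
Write `H` (`bridge`) for the Banach space of real continuous functions on `[0,1]` vanishing at
both endpoints, `ν h = sup |x h(x)|` (`nu`), a continuous norm on `H` strictly weaker than the sup
norm, and `S` (`TSphere`) for the sphere `a² + ν(h)² = 1` in `ℝ × H`.

*`S(I) ≃ S`* (`surjHomeo`). A surjection `f` is determined by `f - f 0` up to a positive factor,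
since its minimum is `0` and its maximum is `1`. Splitting `f - f 0` into the linear function with
the same end value and an element of `H`, and normalizing the pair, gives a point of `S`;
conversely a nonzero `a x + h(x)` is rescaled affinely to have minimum `0` and maximum `1`.

*`S ≃ H`* (`sphereHomeo`). Because `ν` is incomplete, there is a curve `path t` in `H` which is
`1/2`-Lipschitz for `ν`, vanishes for `t ≥ 1` and has no limit in `H` as `t → 0`. The map
`x ↦ x + path (ν x)` is then a homeomorphism of `H \ {0}` onto `H` that is the identity outside
the `ν`-unit ball (`exists_tau`, `abs_tau_le`): this is the Klee–Bessaga deletion of a point.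
Stereographic projection of `S` from the pole `(1, 0)` onto `H`, followed by the inverse of this map
and by the inversion `x ↦ x / ν(x)²`, is a homeomorphism of the punctured sphere onto `H \ {0}`,
and it extends to `S` by sending the pole to `0`.

*`H ≃ ℓ₂`* (`bridge_homeo_ellTwo`). The sine coefficients with lacunary frequencies `2ⁿ` define a
bounded operator `coeff : H → ℓ₂`, which is onto by truncating sine polynomials and using the
fourth-moment (Khinchine) inequality (`khinchine`, `coeff_approx`). The Bartle–Graves theorem
(`exists_continuous_section`) gives a continuous section, hence `H ≃ ℓ₂ × K` with
`K = ker coeff`. On the other hand every separable Banach space `F` is a quotient of `ℓ₁`, so again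
by Bartle–Graves and an infinite shift (`absorb`) `F × ℓ₁(ℓ₁) ≃ ℓ₁(ℓ₁)`; the Mazur map identifies
`ℓ₁(ℓ₁)` with `ℓ₂`, so that `F × ℓ₂ ≃ ℓ₂` (`absorb_separable`). Therefore
`H ≃ ℓ₂ × K ≃ (ℓ₂ × ℓ₂) × K ≃ ℓ₂ × H ≃ ℓ₂`.
-/

open unitInterval

/-- `S(I)`: the set of surjective continuous self-maps of the unit interval. -/
def SurjSet : Set C(I, I) := {f | Function.Surjective f}

open Filter Topology

/-! ### Bartle–Graves sections -/

/-- An approximate right inverse can be chosen continuously: away from `0` the admissible sets are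
convex and locally contain a common point, so a partition of unity applies; continuity at `0`
follows from the linear bound. -/
theorem exists_approx_section {E F : Type*} [NormedAddCommGroup E] [NormedSpace ℝ E]
    [NormedAddCommGroup F] [NormedSpace ℝ F] (T : E →L[ℝ] F) (C : ℝ)
    (h : ∀ y, ∃ x, ‖x‖ ≤ C * ‖y‖ ∧ ‖y - T x‖ ≤ ‖y‖ / 2) :
    ∃ A : F → E, Continuous A ∧ ∀ y, ‖A y‖ ≤ (C + 1) * ‖y‖ ∧ ‖y - T (A y)‖ ≤ 3 / 4 * ‖y‖ := by
  let X := {y : F // y ≠ 0}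
  let t : X → Set E := fun y => {x | ‖x‖ ≤ (C + 1) * ‖(y : F)‖ ∧ ‖(y : F) - T x‖ ≤ 3 / 4 * ‖(y : F)‖}
  have hconv : ∀ y, Convex ℝ (t y) := by
    intro y
    have h1 : Convex ℝ {x : E | ‖x‖ ≤ (C + 1) * ‖(y : F)‖} := by
      have := convex_closedBall (0 : E) ((C + 1) * ‖(y : F)‖)
      simpa [Metric.closedBall, dist_zero_right] using this
    have h2 : Convex ℝ (T.toLinearMap ⁻¹' Metric.closedBall (y : F) (3 / 4 * ‖(y : F)‖)) :=
      (convex_closedBall _ _).linear_preimage _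
    convert h1.inter h2 using 1
    ext x
    simp [t, dist_eq_norm, norm_sub_rev]
  obtain ⟨g, hg⟩ := exists_continuous_forall_mem_convex_of_local_const (X := X) hconv (by
    intro y
    obtain ⟨x, hx1, hx2⟩ := h y
    refine ⟨x, ?_⟩
    have hy : 0 < ‖(y : F)‖ := norm_pos_iff.2 y.2
    have e1 : ∀ᶠ z : X in 𝓝 y, C * ‖(y : F)‖ < (C + 1) * ‖(z : F)‖ := by
      have : Continuous fun z : X => (C + 1) * ‖(z : F)‖ := by fun_prop
      exact this.continuousAt.eventually (lt_mem_nhds (by nlinarith))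
    have e2 : ∀ᶠ z : X in 𝓝 y, ‖(z : F) - T x‖ < 3 / 4 * ‖(z : F)‖ := by
      have c1 : Continuous fun z : X => ‖(z : F) - T x‖ := by fun_prop
      have c2 : Continuous fun z : X => 3 / 4 * ‖(z : F)‖ := by fun_prop
      exact c1.continuousAt.eventually_lt c2.continuousAt (by linarith)
    filter_upwards [e1, e2] with z hz1 hz2
    exact ⟨hx1.trans hz1.le, hz2.le⟩)
  classical
  let A : F → E := fun y => if hy : y = 0 then 0 else g ⟨y, hy⟩
  have hA : ∀ y, ‖A y‖ ≤ (C + 1) * ‖y‖ ∧ ‖y - T (A y)‖ ≤ 3 / 4 * ‖y‖ := by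
    intro y
    by_cases hy : y = 0
    · simp [A, hy]
    · have := hg ⟨y, hy⟩
      simp only [A, hy, dite_false]
      exact this
  refine ⟨A, ?_, hA⟩
  rw [continuous_iff_continuousAt]
  intro y
  by_cases hy : y = 0
  · subst hy
    have h0 : A 0 = 0 := by simp [A]
    unfold ContinuousAt
    rw [h0]
    refine squeeze_zero_norm (fun y => (hA y).1) ?_
    have : Continuous fun y : F => (C + 1) * ‖y‖ := by fun_prop
    simpa using this.tendsto 0
  · have hop : IsOpen {y : F | y ≠ 0} := isOpen_ne
    have : ContinuousOn A {y : F | y ≠ 0} := by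
      rw [continuousOn_iff_continuous_domRestrict]
      refine g.continuous.congr fun z => ?_
      have : (z : F) ≠ 0 := z.2
      simp [A, this]
    exact this.continuousAt (hop.mem_nhds hy)

/-- The **Bartle–Graves theorem**, with a linear growth bound on the section. The section is the
series obtained by repeatedly applying the approximate right inverse to the remaining error. -/
theorem exists_continuous_section {E F : Type*} [NormedAddCommGroup E] [NormedSpace ℝ E]
    [CompleteSpace E]
    [NormedAddCommGroup F] [NormedSpace ℝ F] (T : E →L[ℝ] F) (C : ℝ) (hC : 0 ≤ C)
    (h : ∀ y, ∃ x, ‖x‖ ≤ C * ‖y‖ ∧ ‖y - T x‖ ≤ ‖y‖ / 2) :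
    ∃ s : F → E, Continuous s ∧ (∀ y, T (s y) = y) ∧ ∃ C' : ℝ, 0 ≤ C' ∧ ∀ y, ‖s y‖ ≤ C' * ‖y‖ := by
  obtain ⟨A, hAc, hA⟩ := exists_approx_section T C h
  let R : F → F := fun y => y - T (A y)
  have hRc : Continuous R := by fun_prop
  have hR : ∀ n y, ‖R^[n] y‖ ≤ (3 / 4) ^ n * ‖y‖ := by
    intro n y
    induction n with
    | zero => simp
    | succ n ih =>
      rw [Function.iterate_succ_apply']
      refine (hA _).2.trans ?_
      rw [pow_succ]
      nlinarith
  have hb : ∀ n y, ‖A (R^[n] y)‖ ≤ (C + 1) * ‖y‖ * (3 / 4) ^ n := by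
    intro n y
    refine (hA _).1.trans ?_
    have := mul_le_mul_of_nonneg_left (hR n y) (by linarith : 0 ≤ C + 1)
    linarith
  have hgeo : Summable fun n : ℕ => (3 / 4 : ℝ) ^ n :=
    summable_geometric_of_lt_one (by norm_num) (by norm_num)
  have hsum : ∀ y, Summable fun n => A (R^[n] y) := fun y =>
    Summable.of_norm_bounded (hgeo.mul_left _) (fun n => hb n y)
  refine ⟨fun y => ∑' n, A (R^[n] y), ?_, ?_, (C + 1) * 4, by positivity, ?_⟩
  · rw [continuous_iff_continuousAt]
    intro y
    have : ContinuousOn (fun y => ∑' n, A (R^[n] y)) (Metric.ball 0 (‖y‖ + 1)) := by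
      refine continuousOn_tsum (u := fun n => (C + 1) * (‖y‖ + 1) * (3 / 4) ^ n)
        (fun n => (hAc.comp (hRc.iterate n)).continuousOn) (hgeo.mul_left _) ?_
      intro n z hz
      refine (hb n z).trans ?_
      have : ‖z‖ ≤ ‖y‖ + 1 := by simpa using (mem_ball_zero_iff.1 hz).le
      gcongr
    exact this.continuousAt (Metric.isOpen_ball.mem_nhds (by simp))
  · intro y
    have h1 : HasSum (fun n => T (A (R^[n] y))) (T (∑' n, A (R^[n] y))) :=
      T.hasSum (hsum y).hasSum
    have h2 : HasSum (fun n => T (A (R^[n] y))) y := by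
      rw [h1.summable.hasSum_iff_tendsto_nat]
      have e : ∀ n, ∑ i ∈ Finset.range n, T (A (R^[i] y)) = y - R^[n] y := by
        intro n
        induction n with
        | zero => simp
        | succ n ih =>
          rw [Finset.sum_range_succ, ih, Function.iterate_succ_apply']
          change y - R^[n] y + T (A (R^[n] y)) = y - (R^[n] y - T (A (R^[n] y)))
          abel
      simp_rw [e]
      have : Tendsto (fun n => R^[n] y) atTop (𝓝 0) := by
        refine squeeze_zero_norm (fun n => hR n y) ?_
        simpa using (tendsto_pow_atTop_nhds_zero_of_lt_one (r := (3 / 4 : ℝ))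
          (by norm_num) (by norm_num)).mul_const ‖y‖
      simpa using tendsto_const_nhds.sub this
    exact h1.unique h2
  · intro y
    have h4 : HasSum (fun n : ℕ => (C + 1) * ‖y‖ * (3 / 4 : ℝ) ^ n) ((C + 1) * ‖y‖ * 4) := by
      have := (hasSum_geometric_of_lt_one (r := (3 / 4 : ℝ)) (by norm_num) (by norm_num)).mul_left
        ((C + 1) * ‖y‖)
      rwa [show (1 - 3 / 4 : ℝ)⁻¹ = 4 by norm_num] at this
    have := tsum_of_norm_bounded h4 (fun n => hb n y)
    linarith

/-! ### Absorption in `ℓ₁`-sums -/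

/-- `ℓ₁(E)`: the absolutely summable sequences in `E`. -/
abbrev ellOne (E : Type*) [NormedAddCommGroup E] : Type _ := ↥(lp (fun _ : ℕ => E) 1)

theorem ellOne_hasSum_norm {E : Type*} [NormedAddCommGroup E] (x : ellOne E) :
    HasSum (fun n => ‖x n‖) ‖x‖ := by
  simpa using lp.hasSum_norm (p := 1) (by simp) x

theorem memℓp_one {E : Type*} [NormedAddCommGroup E] {f : ℕ → E}
    (hf : Summable fun n => ‖f n‖) : Memℓp f 1 :=
  memℓp_gen (by simpa using hf)

/-- Every separable Banach space `F` is a quotient of `ℓ₁`: send the unit vectors to a dense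
sequence in the unit ball. The conclusion is in the form needed for `exists_continuous_section`. -/
theorem exists_ellOne_quotient (F : Type*) [NormedAddCommGroup F] [NormedSpace ℝ F]
    [CompleteSpace F] [SecondCountableTopology F] :
    ∃ T : ellOne ℝ →L[ℝ] F, ∀ y, ∃ x, ‖x‖ ≤ 1 * ‖y‖ ∧ ‖y - T x‖ ≤ ‖y‖ / 2 := by
  let B := ↥(Metric.closedBall (0 : F) 1)
  have : Nonempty B := ⟨⟨0, by simp⟩⟩
  let u : ℕ → B := TopologicalSpace.denseSeq B
  have hu : ∀ n, ‖(u n : F)‖ ≤ 1 := fun n => mem_closedBall_zero_iff.1 (u n).2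
  have hb : ∀ (x : ellOne ℝ) n, ‖x n • (u n : F)‖ ≤ ‖x n‖ := fun x n => by
    rw [norm_smul]; nlinarith [hu n, norm_nonneg (x n)]
  have hs : ∀ x : ellOne ℝ, Summable fun n => x n • (u n : F) := fun x =>
    Summable.of_norm_bounded (ellOne_hasSum_norm x).summable (hb x)
  let T₀ : ellOne ℝ →ₗ[ℝ] F :=
    { toFun := fun x => ∑' n, x n • (u n : F)
      map_add' := fun x y => by
        rw [← (hs x).tsum_add (hs y)]
        exact tsum_congr fun n => by simp [add_smul]
      map_smul' := fun c x => by
        rw [RingHom.id_apply, ← (hs x).tsum_const_smul c]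
        exact tsum_congr fun n => by simp [mul_smul] }
  refine ⟨T₀.mkContinuous 1 fun x => ?_, fun y => ?_⟩
  · rw [one_mul]
    exact tsum_of_norm_bounded (ellOne_hasSum_norm x) (hb x)
  · by_cases hy : y = 0
    · exact ⟨0, by simp [hy]⟩
    have hy' : 0 < ‖y‖ := norm_pos_iff.2 hy
    let v : B := ⟨‖y‖⁻¹ • y, by simp [norm_smul, hy'.ne']⟩
    obtain ⟨n, hn⟩ := (TopologicalSpace.denseRange_denseSeq B).exists_dist_lt v
      (show (0 : ℝ) < 1 / 2 by norm_num)
    refine ⟨lp.single 1 n ‖y‖, ?_, ?_⟩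
    · rw [lp.norm_single (by simp)]; simp
    · have : T₀ (lp.single 1 n ‖y‖) = ‖y‖ • (u n : F) := by
        change ∑' m, (lp.single 1 n ‖y‖ : ellOne ℝ) m • (u m : F) = _
        rw [tsum_eq_single n]
        · rw [lp.single_apply_self]
        · intro m hm
          rw [lp.single_apply_ne _ _ _ hm, zero_smul]
      rw [LinearMap.mkContinuous_apply, this]
      have e : y - ‖y‖ • (u n : F) = ‖y‖ • ((v : F) - u n) := by
        simp [v, smul_sub, smul_smul, hy'.ne']
      have hn' : ‖(v : F) - u n‖ < 1 / 2 := by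
        rw [← dist_eq_norm]; exact hn
      rw [e, norm_smul, norm_norm]
      nlinarith

/-- Coordinatewise application of a map of linear growth to a sequence in `ℓ₁(E)`. -/
noncomputable def ellOneMap {E : Type*} [NormedAddCommGroup E] (f : E → E) (C : ℝ)
    (hf : ∀ x, ‖f x‖ ≤ C * ‖x‖) (x : ellOne E) : ellOne E :=
  ⟨fun n => f (x n), memℓp_one (Summable.of_nonneg_of_le (fun _ => norm_nonneg _)
    (fun n => hf (x n)) ((ellOne_hasSum_norm x).summable.mul_left C))⟩

/-- Dominated convergence: `‖f (y n) - f (x n)‖` is at most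
`min ‖f (y n) - f (x n)‖ (2 C ‖x n‖) + C ‖y n - x n‖`. -/
theorem continuous_ellOneMap {E : Type*} [NormedAddCommGroup E] (f : E → E) (C : ℝ)
    (hf : ∀ x, ‖f x‖ ≤ C * ‖x‖) (hC : 0 ≤ C) (hc : Continuous f) :
    Continuous (ellOneMap f C hf) := by
  rw [continuous_iff_continuousAt]
  intro x
  unfold ContinuousAt
  rw [tendsto_iff_norm_sub_tendsto_zero]
  have hx := (ellOne_hasSum_norm x).summable
  have hcoord : ∀ n, Tendsto (fun y : ellOne E => y n) (𝓝 x) (𝓝 (x n)) := fun n =>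
    ((lp.lipschitzWith_one_eval (E := fun _ : ℕ => E) 1 n).continuous.tendsto x)
  have hdom : Tendsto (fun y : ellOne E => ∑' n, min ‖f (y n) - f (x n)‖ (2 * C * ‖x n‖)) (𝓝 x)
      (𝓝 (∑' _ : ℕ, (0 : ℝ))) := by
    refine tendsto_tsum_of_dominated_convergence (bound := fun n => 2 * C * ‖x n‖)
      (hx.mul_left _) (fun n => ?_) (Eventually.of_forall fun y n => ?_)
    · have h1 : Tendsto (fun y : ellOne E => ‖f (y n) - f (x n)‖) (𝓝 x) (𝓝 0) := by
        rw [← tendsto_iff_norm_sub_tendsto_zero]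
        exact (hc.tendsto _).comp (hcoord n)
      refine squeeze_zero (fun y => by positivity) (fun y => min_le_left _ _) h1
    · rw [Real.norm_of_nonneg (by positivity)]
      exact min_le_right _ _
  have hlim : Tendsto (fun y : ellOne E => (∑' n, min ‖f (y n) - f (x n)‖ (2 * C * ‖x n‖))
      + C * ‖y - x‖) (𝓝 x) (𝓝 0) := by
    have h2 : Tendsto (fun y : ellOne E => C * ‖y - x‖) (𝓝 x) (𝓝 0) := by
      have : Continuous fun y : ellOne E => C * ‖y - x‖ := by fun_prop
      simpa using this.tendsto x
    simpa using hdom.add h2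
  refine squeeze_zero (fun _ => norm_nonneg _) (fun y => ?_) hlim
  have hs1 : Summable fun n => min ‖f (y n) - f (x n)‖ (2 * C * ‖x n‖) :=
    Summable.of_nonneg_of_le (fun n => by positivity) (fun n => min_le_right _ _) (hx.mul_left _)
  have hyx := ellOne_hasSum_norm (y - x)
  have hsum := hs1.hasSum.add (hyx.mul_left C)
  refine hasSum_le (fun n => ?_) (ellOne_hasSum_norm _) hsum
  have e1 : (ellOneMap f C hf y - ellOneMap f C hf x) n = f (y n) - f (x n) := rfl
  have e2 : (y - x) n = y n - x n := rfl
  rw [e1, e2]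
  have b1 : ‖f (y n) - f (x n)‖ ≤ 2 * C * ‖x n‖ + C * ‖y n - x n‖ := by
    have h1 := norm_sub_le (f (y n)) (f (x n))
    have h2 := hf (y n)
    have h3 := hf (x n)
    have h4 : ‖y n‖ ≤ ‖y n - x n‖ + ‖x n‖ := by
      simpa using norm_add_le (y n - x n) (x n)
    nlinarith
  rcases le_total ‖f (y n) - f (x n)‖ (2 * C * ‖x n‖) with h | h
  · rw [min_eq_left h]
    have : 0 ≤ C * ‖y n - x n‖ := by positivity
    linarith
  · rw [min_eq_right h]; exact b1

/-- The right shift, with prescribed new zeroth coordinate. -/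
noncomputable def ellOneCons {E : Type*} [NormedAddCommGroup E] (e : E) (x : ellOne E) : ellOne E :=
  ⟨fun n => Nat.casesOn n e (fun m => x m), memℓp_one (by
    rw [← summable_nat_add_iff 1]
    exact (ellOne_hasSum_norm x).summable)⟩

/-- The left shift on `ℓ₁(E)`. -/
noncomputable def ellOneTail {E : Type*} [NormedAddCommGroup E] (x : ellOne E) : ellOne E :=
  ⟨fun n => x (n + 1), memℓp_one
    ((summable_nat_add_iff 1).2 (ellOne_hasSum_norm x).summable)⟩

theorem continuous_ellOneCons {E : Type*} [NormedAddCommGroup E] :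
    Continuous fun p : E × ellOne E => ellOneCons p.1 p.2 := by
  rw [continuous_iff_continuousAt]
  rintro ⟨e, x⟩
  unfold ContinuousAt
  rw [tendsto_iff_norm_sub_tendsto_zero]
  have : Continuous fun p : E × ellOne E => ‖p.1 - e‖ + ‖p.2 - x‖ := by fun_prop
  have h := this.tendsto (e, x)
  simp only [sub_self, norm_zero, add_zero] at h
  refine h.congr fun p => ?_
  have h1 := ellOne_hasSum_norm (ellOneCons p.1 p.2 - ellOneCons e x)
  rw [← h1.tsum_eq, h1.summable.tsum_eq_zero_add]
  congr 1
  exact (ellOne_hasSum_norm (p.2 - x)).tsum_eq.symm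

theorem continuous_ellOneTail {E : Type*} [NormedAddCommGroup E] :
    Continuous (ellOneTail : ellOne E → ellOne E) := by
  have : LipschitzWith 1 (ellOneTail : ellOne E → ellOne E) := by
    refine LipschitzWith.of_dist_le_mul fun x y => ?_
    rw [dist_eq_norm, dist_eq_norm, NNReal.coe_one, one_mul]
    have h := ellOne_hasSum_norm (x - y)
    rw [← h.tsum_eq, h.summable.tsum_eq_zero_add]
    have e := (ellOne_hasSum_norm (ellOneTail x - ellOneTail y)).tsum_eq
    have e' : (∑' n, ‖(x - y) (n + 1)‖) = ‖ellOneTail x - ellOneTail y‖ := e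
    rw [e']
    linarith [norm_nonneg ((x - y) 0)]
  exact this.continuous

/-- If `q : E → F` has a continuous section `s` of linear growth, then `F × ℓ₁(E) ≃ ℓ₁(E)`.
The section splits `E` into its `F`-part `s (q e)` and its kernel part `e - s (q e)`; the
homeomorphism keeps all kernel parts in place and shifts the sequence of `F`-parts by one, the new
first entry being the given point of `F`. -/
theorem absorb {E F : Type*} [NormedAddCommGroup E] [NormedSpace ℝ E]
    [NormedAddCommGroup F] [NormedSpace ℝ F] (q : E →L[ℝ] F) (s : F → E) (hs : Continuous s)
    (hqs : ∀ y, q (s y) = y) (C : ℝ) (hC : 0 ≤ C) (hb : ∀ y, ‖s y‖ ≤ C * ‖y‖) :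
    Nonempty (F × ellOne E ≃ₜ ellOne E) := by
  have hb' : ∀ x, ‖s (q x)‖ ≤ (C * ‖q‖) * ‖x‖ := fun x => by
    refine (hb _).trans ?_
    have := mul_le_mul_of_nonneg_left (q.le_opNorm x) hC
    linarith
  let N : ellOne E → ellOne E := ellOneMap (fun x => s (q x)) (C * ‖q‖) hb'
  have hN : Continuous N := continuous_ellOneMap _ _ _ (by positivity) (by fun_prop)
  have hNa : ∀ x n, N x n = s (q (x n)) := fun _ _ => rfl
  have hs0 : s 0 = 0 := by simpa using hb 0
  have c0 : Continuous fun x : ellOne E => x 0 :=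
    (lp.lipschitzWith_one_eval (E := fun _ : ℕ => E) 1 0).continuous
  exact ⟨{
    toFun := fun p => p.2 - N p.2 + ellOneCons (s p.1) (N p.2)
    invFun := fun x => (q (x 0), x - N x + ellOneTail (N x))
    left_inv := by
      rintro ⟨h, x⟩
      -- `N` extracts the `F`-parts, which after the shift are `s h` followed by those of `x`.
      have key : N (x - N x + ellOneCons (s h) (N x)) = ellOneCons (s h) (N x) := by
        ext n
        rw [hNa]
        cases n with
        | zero =>
          change s (q (x 0 - s (q (x 0)) + s h)) = s h
          simp [hqs]
        | succ n =>
          change s (q (x (n + 1) - s (q (x (n + 1))) + s (q (x n)))) = s (q (x n))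
          simp [hqs]
      refine Prod.ext ?_ ?_
      · change q (x 0 - s (q (x 0)) + s h) = h
        simp [hqs]
      · simp only [key]
        ext n
        change x n - s (q (x n)) + _ - _ + s (q (x n)) = x n
        abel
    right_inv := by
      intro x
      have key : N (x - N x + ellOneTail (N x)) = ellOneTail (N x) := by
        ext n
        rw [hNa]
        change s (q (x n - s (q (x n)) + s (q (x (n + 1))))) = s (q (x (n + 1)))
        simp [hqs]
      simp only [key]
      ext n
      cases n with
      | zero =>
        change x 0 - s (q (x 0)) + s (q (x 1)) - s (q (x 1)) + s (q (x 0)) = x 0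
        abel
      | succ n =>
        change x (n+1) - s (q (x (n+1))) + s (q (x (n+1+1))) - s (q (x (n+1+1))) + s (q (x (n+1)))
          = x (n+1)
        abel
    continuous_toFun := by
      have h1 : Continuous fun p : F × ellOne E => ellOneCons (s p.1) (N p.2) :=
        continuous_ellOneCons.comp
          ((hs.comp continuous_fst).prodMk (hN.comp continuous_snd))
      exact (continuous_snd.sub (hN.comp continuous_snd)).add h1
    continuous_invFun :=
      (q.continuous.comp c0).prodMk
        ((continuous_id.sub hN).add (continuous_ellOneTail.comp hN)) }⟩

/-! ### The Mazur map -/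

/-- The Hilbert space `ℓ₂`. -/
abbrev ellTwo : Type := ↥(lp (fun _ : ℕ => ℝ) 2)

theorem ellTwo_hasSum_sq (x : ellTwo) : HasSum (fun n => (x n) ^ 2) (‖x‖ ^ 2) := by
  simpa using lp.hasSum_norm (p := 2) (by simp) x

theorem memℓp_two {f : ℕ → ℝ} (hf : Summable fun n => (f n) ^ 2) : Memℓp f 2 :=
  memℓp_gen (by simpa using hf)

/-- The signed square root, inverse to `a ↦ a |a|`. -/
noncomputable def msqrt (a : ℝ) : ℝ := SignType.sign a * √|a|

theorem msqrt_sq (a : ℝ) : msqrt a ^ 2 = |a| := by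
  rcases lt_trichotomy a 0 with h | h | h
  · simp [msqrt, h]
  · simp [msqrt, h]
  · simp [msqrt, h]

theorem msqrt_mul_abs (a : ℝ) : msqrt a * |msqrt a| = a := by
  rcases lt_trichotomy a 0 with h | h | h
  · simp [msqrt, h, abs_of_neg]
    rw [Real.mul_self_sqrt (by linarith)]; simp
  · simp [msqrt, h]
  · simp [msqrt, h, abs_of_pos]
    exact Real.mul_self_sqrt h.le

theorem msqrt_of_mul_abs (a : ℝ) : msqrt (a * |a|) = a := by
  have e : |(a * |a|)| = a * a := by rw [abs_mul, abs_abs, abs_mul_abs_self]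
  unfold msqrt
  rw [e, Real.sqrt_mul_self_eq_abs]
  rcases lt_trichotomy a 0 with h | h | h
  · have : a * |a| < 0 := by rw [abs_of_neg h]; nlinarith
    rw [sign_neg this, abs_of_neg h]; simp
  · simp [h]
  · have : 0 < a * |a| := by rw [abs_of_pos h]; nlinarith
    simp [this, h.le]

theorem mul_abs_sub_le (a b : ℝ) : |(b * |b| - a * |a|)| ≤ 2 * (|a| * |b - a|) + (b - a) ^ 2 := by
  have e : b * |b| - a * |a| = (b - a) * |b| + a * (|b| - |a|) := by ring
  rw [e]
  refine (abs_add_le _ _).trans ?_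
  rw [abs_mul, abs_mul, abs_abs, ← sq_abs (b - a)]
  have h1 : |b| ≤ |a| + |b - a| := by
    have := abs_add_le a (b - a); simpa using this
  have h2 : |(|b| - |a|)| ≤ |b - a| := abs_abs_sub_abs_le b a
  nlinarith [abs_nonneg a, abs_nonneg (b - a), mul_le_mul_of_nonneg_left h2 (abs_nonneg a),
    mul_le_mul_of_nonneg_left h1 (abs_nonneg (b - a))]

theorem msqrt_sub_sq_le (a b : ℝ) : (msqrt a - msqrt b) ^ 2 ≤ 2 * |a - b| := by
  have ha := msqrt_mul_abs a
  have hb := msqrt_mul_abs b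
  set u := msqrt a
  set v := msqrt b
  rw [← ha, ← hb]
  rcases le_total 0 u with hu | hu <;> rcases le_total 0 v with hv | hv
  · rw [abs_of_nonneg hu, abs_of_nonneg hv]
    rcases le_total u v with h | h
    · rw [abs_of_nonpos] <;> nlinarith
    · rw [abs_of_nonneg] <;> nlinarith
  · rw [abs_of_nonneg hu, abs_of_nonpos hv]
    rw [abs_of_nonneg] <;> nlinarith [sq_nonneg (u + v)]
  · rw [abs_of_nonpos hu, abs_of_nonneg hv]
    rw [abs_of_nonpos] <;> nlinarith [sq_nonneg (u + v)]
  · rw [abs_of_nonpos hu, abs_of_nonpos hv]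
    rcases le_total u v with h | h
    · rw [abs_of_nonpos] <;> nlinarith
    · rw [abs_of_nonneg] <;> nlinarith

/-- The norm of `ℓ₁(ℓ₁)` as a single sum, along the pairing `ℕ × ℕ ≃ ℕ`. -/
theorem ellOne_ellOne_hasSum (x : ellOne (ellOne ℝ)) :
    HasSum (fun k : ℕ => |x k.unpair.1 k.unpair.2|) ‖x‖ := by
  have h1 : ∀ n, HasSum (fun m => |x n m|) ‖x n‖ := fun n => ellOne_hasSum_norm (x n)
  have hs : Summable fun p : ℕ × ℕ => |x p.1 p.2| := by
    rw [summable_prod_of_nonneg (fun p => abs_nonneg _)]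
    refine ⟨fun n => (h1 n).summable, ?_⟩
    exact (ellOne_hasSum_norm x).summable.congr fun n => (h1 n).tsum_eq.symm
  have h2 : HasSum (fun p : ℕ × ℕ => |x p.1 p.2|) ‖x‖ := by
    have h3 := hs.hasSum.prod_fiberwise h1
    rw [← h3.unique (ellOne_hasSum_norm x)]
    exact hs.hasSum
  have h4 : HasSum ((fun p : ℕ × ℕ => |x p.1 p.2|) ∘ Nat.pairEquiv.symm) ‖x‖ :=
    (Equiv.hasSum_iff Nat.pairEquiv.symm).2 h2
  have e : (fun k : ℕ => |x k.unpair.1 k.unpair.2|) =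
      (fun p : ℕ × ℕ => |x p.1 p.2|) ∘ Nat.pairEquiv.symm := by
    funext k
    simp only [Function.comp_apply, Nat.pairEquiv_symm_apply]
  rw [e]; exact h4

theorem memℓp_ellOne_ellOne {f : ℕ → ℝ} (hf : Summable fun k => |f k|) (n : ℕ) :
    Memℓp (fun m => f (Nat.pair n m)) 1 := by
  refine memℓp_one ?_
  have : Function.Injective fun m => Nat.pair n m := fun a b h => (Nat.pair_eq_pair.1 h).2
  exact hf.comp_injective this

/-- An absolutely summable sequence as an element of `ℓ₁(ℓ₁)`, via the pairing `ℕ × ℕ ≃ ℕ`. -/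
noncomputable def unflatten (f : ℕ → ℝ) (hf : Summable fun k => |f k|) : ellOne (ellOne ℝ) :=
  ⟨fun n => ⟨fun m => f (Nat.pair n m), memℓp_ellOne_ellOne hf n⟩, memℓp_one (by
    have h1 : Summable fun p : ℕ × ℕ => |f (Nat.pair p.1 p.2)| :=
      Nat.pairEquiv.summable_iff.2 hf
    have h2 := ((summable_prod_of_nonneg (fun p => abs_nonneg _)).1 h1).2
    refine h2.congr fun n => ?_
    exact (ellOne_hasSum_norm (⟨fun m => f (Nat.pair n m), memℓp_ellOne_ellOne hf n⟩ : ellOne ℝ)).tsum_eq)⟩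

/-- The **Mazur map**: signed square roots of the coordinates give `ℓ₁(ℓ₁) ≃ ℓ₂`. -/
theorem mazur : Nonempty (ellOne (ellOne ℝ) ≃ₜ ellTwo) := by
  have hN : ∀ y : ellTwo, Summable fun k => |(y k * |y k|)| := fun y =>
    (ellTwo_hasSum_sq y).summable.congr fun k => by rw [abs_mul, abs_abs, abs_mul_abs_self, sq]
  exact ⟨{
    toFun := fun x => ⟨fun k => msqrt (x k.unpair.1 k.unpair.2), memℓp_two
      ((ellOne_ellOne_hasSum x).summable.congr fun k => (msqrt_sq _).symm)⟩
    invFun := fun y => unflatten (fun k => y k * |y k|) (hN y)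
    left_inv := fun x => by
      ext n m
      change msqrt (x (Nat.pair n m).unpair.1 (Nat.pair n m).unpair.2) *
        |msqrt (x (Nat.pair n m).unpair.1 (Nat.pair n m).unpair.2)| = x n m
      rw [msqrt_mul_abs, Nat.unpair_pair]
    right_inv := fun y => by
      ext k
      change msqrt (y (Nat.pair k.unpair.1 k.unpair.2) * |y (Nat.pair k.unpair.1 k.unpair.2)|) = y k
      rw [msqrt_of_mul_abs, Nat.pair_unpair]
    continuous_toFun := by
      rw [continuous_iff_continuousAt]
      intro x
      unfold ContinuousAt
      rw [tendsto_iff_norm_sub_tendsto_zero]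
      have hc : Continuous fun y : ellOne (ellOne ℝ) => √(2 * ‖y - x‖) := by fun_prop
      have hl := hc.tendsto x
      simp only [sub_self, norm_zero, mul_zero, Real.sqrt_zero] at hl
      refine squeeze_zero (fun _ => norm_nonneg _) (fun y => ?_) hl
      refine Real.le_sqrt_of_sq_le ?_
      refine hasSum_le (fun k => ?_) (ellTwo_hasSum_sq _) ((ellOne_ellOne_hasSum (y - x)).mul_left 2)
      exact msqrt_sub_sq_le _ _
    continuous_invFun := by
      rw [continuous_iff_continuousAt]
      intro x
      unfold ContinuousAt
      rw [tendsto_iff_norm_sub_tendsto_zero]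
      have hc : Continuous fun y : ellTwo => ‖y - x‖ * ‖x‖ ^ 2 + ‖y - x‖ + ‖y - x‖ ^ 2 := by
        fun_prop
      have hl := hc.tendsto x
      simp only [sub_self, norm_zero, zero_mul, add_zero, ne_eq, OfNat.ofNat_ne_zero,
        not_false_eq_true, zero_pow] at hl
      refine squeeze_zero (fun _ => norm_nonneg _) (fun y => ?_) hl
      -- Cauchy–Schwarz for `∑ |x k| |y k - x k|` in the form of Young's inequality with weight
      -- `‖y - x‖`, so that all terms can be compared one coordinate at a time.
      have e : ‖y - x‖ * ‖x‖ ^ 2 + ‖y - x‖ + ‖y - x‖ ^ 2 =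
        ‖y - x‖ * ‖x‖ ^ 2 + ‖y - x‖⁻¹ * ‖y - x‖ ^ 2 + ‖y - x‖ ^ 2 := by
        rcases eq_or_ne ‖y - x‖ 0 with h | h
        · simp [h]
        · field_simp
      rw [e]
      have hd := ellTwo_hasSum_sq (y - x)
      refine hasSum_le (fun k => ?_) (ellOne_ellOne_hasSum _)
        ((((ellTwo_hasSum_sq x).mul_left ‖y - x‖).add (hd.mul_left ‖y - x‖⁻¹)).add hd)
      change |(y (Nat.pair k.unpair.1 k.unpair.2) * |y (Nat.pair k.unpair.1 k.unpair.2)|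
        - x (Nat.pair k.unpair.1 k.unpair.2) * |x (Nat.pair k.unpair.1 k.unpair.2)|)| ≤
        ‖y - x‖ * x k ^ 2 + ‖y - x‖⁻¹ * (y k - x k) ^ 2 + (y k - x k) ^ 2
      rw [Nat.pair_unpair]
      refine (mul_abs_sub_le _ _).trans ?_
      gcongr
      have hk : |y k - x k| ≤ ‖y - x‖ := lp.norm_apply_le_norm (by simp) (y - x) k
      rcases eq_or_ne ‖y - x‖ 0 with h | h
      · rw [h] at hk
        have : |y k - x k| = 0 := le_antisymm hk (abs_nonneg _)
        simp [this, h]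
      · have hp : 0 < ‖y - x‖ := lt_of_le_of_ne (norm_nonneg _) h.symm
        rw [← sq_abs (x k), ← sq_abs (y k - x k)]
        have : 0 ≤ ‖y - x‖⁻¹ * (‖y - x‖ * |x k| - |y k - x k|) ^ 2 := by positivity
        have e2 : ‖y - x‖⁻¹ * (‖y - x‖ * |x k| - |y k - x k|) ^ 2 = ‖y - x‖ * |x k| ^ 2
          + ‖y - x‖⁻¹ * |y k - x k| ^ 2 - 2 * (|x k| * |y k - x k|) := by
          field_simp; ring
        linarith }⟩

/-! ### A quotient map from `C₀[0,1]` onto `ℓ₂` -/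

/-- A `1`-periodic function which some shift turns into its negative has mean zero. -/
theorem integral_eq_zero_of_shift_neg {F : ℝ → ℝ} (hp : Function.Periodic F 1) (c : ℝ)
    (h : ∀ x, F (x + c) = -F x) : ∫ x in (0 : ℝ)..1, F x = 0 := by
  have h1 := hp.intervalIntegral_add_eq 0 c
  have h2 : ∫ x in (0 : ℝ)..1, F (x + c) = ∫ x in (0 + c)..(1 + c), F x :=
    intervalIntegral.integral_comp_add_right F c
  simp only [h, intervalIntegral.integral_neg, zero_add] at h1 h2
  rw [add_comm c 1] at h1
  linarith

/-- The lacunary sine system `sin (2π 2ⁿ x)`. -/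
noncomputable def sinR (n : ℕ) (x : ℝ) : ℝ := Real.sin (2 * Real.pi * 2 ^ n * x)

@[fun_prop]
theorem continuous_sinR (n : ℕ) : Continuous (sinR n) := by unfold sinR; fun_prop

theorem sinR_periodic (n : ℕ) (x : ℝ) : sinR n (x + 1) = sinR n x := by
  unfold sinR
  rw [← Real.sin_add_nat_mul_two_pi (2 * Real.pi * 2 ^ n * x) (2 ^ n)]
  push_cast
  ring_nf

theorem sinR_sq_le (n : ℕ) (x : ℝ) : sinR n x ^ 2 ≤ 1 := Real.sin_sq_le_one _

/-- Half the period of `sinR n`: shifting by it negates `sinR n` and fixes `sinR m` for `m > n`. -/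
noncomputable def halfPeriod (n : ℕ) : ℝ := (2 ^ n)⁻¹ / 2

theorem sinR_add_halfPeriod (n : ℕ) (x : ℝ) : sinR n (x + halfPeriod n) = -sinR n x := by
  unfold sinR halfPeriod
  rw [← Real.sin_add_pi]
  congr 1
  field_simp

theorem sinR_add_halfPeriod_of_lt {n m : ℕ} (h : n < m) (x : ℝ) :
    sinR m (x + halfPeriod n) = sinR m x := by
  obtain ⟨k, rfl⟩ := Nat.exists_eq_add_of_lt h
  unfold sinR halfPeriod
  rw [← Real.sin_add_nat_mul_two_pi (2 * Real.pi * 2 ^ (n + k + 1) * x) (2 ^ k)]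
  congr 1
  push_cast
  field_simp
  ring

theorem integral_sinR_sq (n : ℕ) : ∫ x in (0 : ℝ)..1, sinR n x ^ 2 = 1 / 2 := by
  have h : ∫ x in (0 : ℝ)..1, (sinR n x ^ 2 - 1 / 2) = 0 := by
    refine integral_eq_zero_of_shift_neg (fun x => ?_) ((2 ^ n)⁻¹ / 4) fun x => ?_
    · rw [sinR_periodic]
    -- A quarter period turns `sin² - 1/2` into `cos² - 1/2`, its negative.
    · have e : sinR n (x + (2 ^ n)⁻¹ / 4) = Real.cos (2 * Real.pi * 2 ^ n * x) := by
        unfold sinR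
        rw [← Real.sin_add_pi_div_two]
        congr 1
        field_simp
        ring
      rw [e, Real.cos_sq']
      unfold sinR
      ring
  rw [intervalIntegral.integral_sub (Continuous.intervalIntegrable (by fun_prop) _ _)
    (Continuous.intervalIntegrable (by fun_prop) _ _)] at h
  simp at h
  linarith

theorem integral_sinR_mul {n m : ℕ} (h : n ≠ m) : ∫ x in (0 : ℝ)..1, sinR n x * sinR m x = 0 := by
  wlog hlt : n < m generalizing n m
  · simpa only [mul_comm] using this h.symm (by omega)
  refine integral_eq_zero_of_shift_neg (fun x => ?_) (halfPeriod n) fun x => ?_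
  · rw [sinR_periodic, sinR_periodic]
  · rw [sinR_add_halfPeriod, sinR_add_halfPeriod_of_lt hlt]; ring

/-- Orthogonality of the lacunary sines and **Khinchine's inequality** for the fourth moment. In the
induction the smallest frequency `n` is added: every mixed term that is odd in `sinR n` integrates
to zero, by the shift by `halfPeriod n`. -/
theorem khinchine (a : ℕ → ℝ) (s : Finset ℕ) :
    ∫ x in (0 : ℝ)..1, (∑ k ∈ s, a k * sinR k x) ^ 2 = (∑ k ∈ s, a k ^ 2) / 2 ∧
    ∫ x in (0 : ℝ)..1, (∑ k ∈ s, a k * sinR k x) ^ 4 ≤ 3 * (∑ k ∈ s, a k ^ 2) ^ 2 := by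
  induction s using Finset.induction_on_min with
  | empty => simp
  | insert n s hn ih =>
    have hns : n ∉ s := fun h => lt_irrefl _ (hn n h)
    simp only [Finset.sum_insert hns]
    set G : ℝ → ℝ := fun x => ∑ k ∈ s, a k * sinR k x with hG
    have hGc : Continuous G := by fun_prop
    have hGp : ∀ x, G (x + 1) = G x := fun x => by simp only [hG, sinR_periodic]
    have hGh : ∀ x, G (x + halfPeriod n) = G x := fun x =>
      Finset.sum_congr rfl fun k hk => by rw [sinR_add_halfPeriod_of_lt (hn k hk)]
    have odd : ∀ i j : ℕ, Odd i → ∫ x in (0 : ℝ)..1, sinR n x ^ i * G x ^ j = 0 := fun i j hi => by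
      refine integral_eq_zero_of_shift_neg (fun x => ?_) (halfPeriod n) fun x => ?_
      · rw [sinR_periodic, hGp]
      · rw [sinR_add_halfPeriod, hGh, hi.neg_pow]; ring
    have int : ∀ F : ℝ → ℝ, Continuous F → IntervalIntegrable F MeasureTheory.volume 0 1 :=
      fun F hF => hF.intervalIntegrable _ _
    obtain ⟨ih2, ih4⟩ := ih
    change ∫ x in (0 : ℝ)..1, G x ^ 2 = _ at ih2
    change ∫ x in (0 : ℝ)..1, G x ^ 4 ≤ _ at ih4
    change ∫ x in (0 : ℝ)..1, (a n * sinR n x + G x) ^ 2 = _ ∧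
      ∫ x in (0 : ℝ)..1, (a n * sinR n x + G x) ^ 4 ≤ _
    have o11 := odd 1 1 (by decide)
    have o13 := odd 1 3 (by decide)
    have o31 := odd 3 1 (by decide)
    constructor
    · have e : ∀ x, (a n * sinR n x + G x) ^ 2 =
          a n ^ 2 * sinR n x ^ 2 + 2 * a n * (sinR n x ^ 1 * G x ^ 1) + G x ^ 2 := fun x => by ring
      simp only [e]
      rw [intervalIntegral.integral_add (int _ (by fun_prop)) (int _ (by fun_prop)),
        intervalIntegral.integral_add (int _ (by fun_prop)) (int _ (by fun_prop)),
        intervalIntegral.integral_const_mul, intervalIntegral.integral_const_mul, o11, ih2,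
        integral_sinR_sq]
      ring
    · have e : ∀ x, (a n * sinR n x + G x) ^ 4 ≤
          a n ^ 4 + 4 * a n ^ 3 * (sinR n x ^ 3 * G x ^ 1) + 6 * a n ^ 2 * G x ^ 2
          + 4 * a n * (sinR n x ^ 1 * G x ^ 3) + G x ^ 4 := fun x => by
        have h1 : a n ^ 4 * (sinR n x ^ 2) ^ 2 ≤ a n ^ 4 * 1 := by
          have := sinR_sq_le n x
          gcongr
          nlinarith [sq_nonneg (sinR n x)]
        have h2 : 6 * a n ^ 2 * G x ^ 2 * sinR n x ^ 2 ≤ 6 * a n ^ 2 * G x ^ 2 * 1 := by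
          have := sinR_sq_le n x
          gcongr
        nlinarith
      refine (intervalIntegral.integral_mono_on zero_le_one (int _ (by fun_prop))
        (int _ (by fun_prop)) fun x _ => e x).trans ?_
      rw [intervalIntegral.integral_add (int _ (by fun_prop)) (int _ (by fun_prop)),
        intervalIntegral.integral_add (int _ (by fun_prop)) (int _ (by fun_prop)),
        intervalIntegral.integral_add (int _ (by fun_prop)) (int _ (by fun_prop)),
        intervalIntegral.integral_add (int _ (by fun_prop)) (int _ (by fun_prop)),
        intervalIntegral.integral_const_mul, intervalIntegral.integral_const_mul,
        intervalIntegral.integral_const_mul, o31, o13, ih2, intervalIntegral.integral_const]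
      simp only [smul_eq_mul, sub_zero, one_mul, mul_zero, add_zero]
      have hσ0 : 0 ≤ ∑ k ∈ s, a k ^ 2 := Finset.sum_nonneg fun _ _ => sq_nonneg _
      nlinarith [sq_nonneg (a n ^ 2), mul_nonneg hσ0 (sq_nonneg (a n))]

/-- **Bessel's inequality** for the orthogonal functions `sinR n`, which have square integral `1/2`. -/
theorem bessel {F : ℝ → ℝ} (hF : Continuous F) (s : Finset ℕ) :
    ∑ n ∈ s, (∫ x in (0 : ℝ)..1, F x * sinR n x) ^ 2 ≤ (∫ x in (0 : ℝ)..1, F x ^ 2) / 2 := by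
  set c : ℕ → ℝ := fun n => ∫ x in (0 : ℝ)..1, F x * sinR n x with hc
  have int : ∀ F : ℝ → ℝ, Continuous F → IntervalIntegrable F MeasureTheory.volume 0 1 :=
      fun F hF => hF.intervalIntegrable _ _
  have h0 : 0 ≤ ∫ x in (0 : ℝ)..1, (F x - 2 * ∑ n ∈ s, c n * sinR n x) ^ 2 :=
    intervalIntegral.integral_nonneg zero_le_one fun x _ => sq_nonneg _
  have e : ∀ x, (F x - 2 * ∑ n ∈ s, c n * sinR n x) ^ 2 =
      F x ^ 2 - 4 * (∑ n ∈ s, c n * (F x * sinR n x)) + 4 * (∑ n ∈ s, c n * sinR n x) ^ 2 := by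
    intro x
    have : ∑ n ∈ s, c n * (F x * sinR n x) = F x * ∑ n ∈ s, c n * sinR n x := by
      rw [Finset.mul_sum]; exact Finset.sum_congr rfl fun _ _ => by ring
    rw [this]; ring
  simp only [e] at h0
  rw [intervalIntegral.integral_add (int _ (by fun_prop)) (int _ (by fun_prop)),
    intervalIntegral.integral_sub (int _ (by fun_prop)) (int _ (by fun_prop)),
    intervalIntegral.integral_const_mul, intervalIntegral.integral_const_mul, (khinchine c s).1,
    intervalIntegral.integral_finsetSum fun _ _ => int _ (by fun_prop)] at h0
  simp only [intervalIntegral.integral_const_mul] at h0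
  have e2 : ∑ n ∈ s, c n * (∫ x in (0 : ℝ)..1, F x * sinR n x) = ∑ n ∈ s, c n ^ 2 :=
    Finset.sum_congr rfl fun n _ => by rw [sq]
  rw [e2] at h0
  linarith

/-- The Banach space `H` of continuous functions on `[0,1]` vanishing at both endpoints. -/
def bridge : Submodule ℝ C(I, ℝ) where
  carrier := {h | h 0 = 0 ∧ h 1 = 0}
  add_mem' := fun ha hb => by simp_all
  zero_mem' := by simp
  smul_mem' := fun c h hh => by simp_all

instance : CompleteSpace bridge := by
  have : IsClosed (bridge : Set C(I, ℝ)) := by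
    have h1 : IsClosed {h : C(I, ℝ) | h 0 = 0} :=
      isClosed_eq (continuous_eval_const _) continuous_const
    have h2 : IsClosed {h : C(I, ℝ) | h 1 = 0} :=
      isClosed_eq (continuous_eval_const _) continuous_const
    exact h1.inter h2
  exact this.completeSpace_coe

instance : SecondCountableTopology bridge := by
  infer_instance

/-- Extension of `f ∈ H` to the real line, constant outside `[0,1]`. -/
noncomputable def lineExt (f : bridge) : ℝ → ℝ := Set.IccExtend zero_le_one (f : C(I, ℝ))

@[fun_prop]
theorem continuous_lineExt (f : bridge) : Continuous (lineExt f) :=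
  (f : C(I, ℝ)).continuous.Icc_extend'

theorem lineExt_of_mem (f : bridge) {x : ℝ} (hx : x ∈ I) : lineExt f x = (f : C(I, ℝ)) ⟨x, hx⟩ :=
  Set.IccExtend_of_mem _ _ hx

theorem abs_lineExt_le (f : bridge) (x : ℝ) : |lineExt f x| ≤ ‖f‖ :=
  ContinuousMap.norm_coe_le_norm (f : C(I, ℝ)) _

theorem hasSum_coeff (f : bridge) :
    Summable fun n => (∫ x in (0 : ℝ)..1, lineExt f x * sinR n x) ^ 2 :=
  summable_of_sum_le (fun _ => sq_nonneg _) (bessel (continuous_lineExt f))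

/-- The sequence of sine coefficients `∫ f(x) sin (2π 2ⁿ x) dx`, as a linear map `H → ℓ₂`. -/
noncomputable def coeffₗ : bridge →ₗ[ℝ] ellTwo where
  toFun f := ⟨fun n => ∫ x in (0 : ℝ)..1, lineExt f x * sinR n x, memℓp_two (hasSum_coeff f)⟩
  map_add' f g := by
    ext n
    change ∫ x in (0 : ℝ)..1, lineExt (f + g) x * sinR n x =
      (∫ x in (0 : ℝ)..1, lineExt f x * sinR n x) + ∫ x in (0 : ℝ)..1, lineExt g x * sinR n x
    rw [← intervalIntegral.integral_add (Continuous.intervalIntegrable (by fun_prop) _ _)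
      (Continuous.intervalIntegrable (by fun_prop) _ _)]
    refine intervalIntegral.integral_congr fun x _ => ?_
    exact add_mul (lineExt f x) (lineExt g x) (sinR n x)
  map_smul' c f := by
    ext n
    change ∫ x in (0 : ℝ)..1, lineExt (c • f) x * sinR n x =
      c * (∫ x in (0 : ℝ)..1, lineExt f x * sinR n x)
    rw [← intervalIntegral.integral_const_mul]
    refine intervalIntegral.integral_congr fun x _ => ?_
    exact mul_assoc c (lineExt f x) (sinR n x)

theorem norm_coeffₗ_sq_le (f : bridge) :
    ‖coeffₗ f‖ ^ 2 ≤ (∫ x in (0 : ℝ)..1, lineExt f x ^ 2) / 2 :=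
  hasSum_le_of_sum_le (ellTwo_hasSum_sq (coeffₗ f)) (bessel (continuous_lineExt f))

/-- The coefficient map `coeffₗ` as a bounded operator. -/
noncomputable def coeff : bridge →L[ℝ] ellTwo :=
  coeffₗ.mkContinuous 1 fun f => by
    rw [one_mul]
    refine abs_le_of_sq_le_sq' ?_ (norm_nonneg _) |>.2
    refine (norm_coeffₗ_sq_le f).trans ?_
    have h : ∫ x in (0 : ℝ)..1, lineExt f x ^ 2 ≤ ∫ _ in (0 : ℝ)..1, ‖f‖ ^ 2 :=
      intervalIntegral.integral_mono_on zero_le_one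
        (Continuous.intervalIntegrable (by fun_prop) _ _)
        (Continuous.intervalIntegrable (by fun_prop) _ _) fun x _ =>
        sq_le_sq' (abs_le.1 (abs_lineExt_le f x)).1 (abs_le.1 (abs_lineExt_le f x)).2
    rw [intervalIntegral.integral_const] at h
    rw [smul_eq_mul, sub_zero, one_mul] at h
    have h0 := sq_nonneg ‖f‖
    have h2 : (∫ x in (0 : ℝ)..1, lineExt f x ^ 2) / 2 ≤ ‖f‖ ^ 2 := by linarith
    exact h2

/-- `sinR n` as an element of `H`. -/
noncomputable def sinB (n : ℕ) : bridge :=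
  ⟨⟨fun x => sinR n x, (continuous_sinR n).comp continuous_subtype_val⟩, by simp [sinR], by
    have := sinR_periodic n 0
    simp only [zero_add] at this
    change sinR n 1 = 0
    rw [this]; simp [sinR]⟩

theorem coeff_sinB (n : ℕ) : coeff ((2 : ℝ) • sinB n) = lp.single 2 n 1 := by
  rw [map_smul]
  ext m
  change 2 * (∫ x in (0 : ℝ)..1, lineExt (sinB n) x * sinR m x) = (lp.single 2 n 1 : ellTwo) m
  have e : ∫ x in (0 : ℝ)..1, lineExt (sinB n) x * sinR m x =
      ∫ x in (0 : ℝ)..1, sinR n x * sinR m x := by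
    refine intervalIntegral.integral_congr fun x hx => ?_
    rw [Set.uIcc_of_le zero_le_one] at hx
    simp only [lineExt_of_mem _ hx]; rfl
  rw [e]
  rcases eq_or_ne m n with rfl | h
  · have := integral_sinR_sq m
    simp only [sq] at this
    rw [this, lp.single_apply_self]; norm_num
  · rw [integral_sinR_mul h.symm, lp.single_apply_ne _ _ _ h, mul_zero]

/-- Truncation of the values of `g` to `[-4, 4]`. -/
noncomputable def clampB (g : bridge) : bridge :=
  ⟨⟨fun x => max (-4) (min 4 ((g : C(I, ℝ)) x)), by fun_prop⟩, by simp [g.2.1], by simp [g.2.2]⟩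

theorem abs_sub_clamp_le (y : ℝ) : (y - max (-4) (min 4 y)) ^ 2 ≤ y ^ 4 / 256 := by
  have h : |y - max (-4) (min 4 y)| ≤ y ^ 2 / 16 := by
    rcases le_total 4 y with h | h
    · rw [min_eq_left h, max_eq_right (by norm_num), abs_of_nonneg (by linarith)]
      nlinarith [sq_nonneg (y - 8)]
    · rw [min_eq_right h]
      rcases le_total (-4) y with h' | h'
      · rw [max_eq_right h', sub_self, abs_zero]; positivity
      · rw [max_eq_left h', abs_of_nonpos (by linarith)]
        nlinarith [sq_nonneg (y + 8)]
  rw [← sq_abs]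
  calc _ ≤ (y ^ 2 / 16) ^ 2 := by gcongr
    _ = _ := by ring

/-- Approximate surjectivity of `coeff` with a sup-norm bound: truncate at height `4` the sine
polynomial whose coefficients are a finite part of `a`. The truncation error is small in `L²`
because the fourth moment of the polynomial is bounded by Khinchine's inequality. -/
theorem coeff_approx_unit (a : ellTwo) (ha : ‖a‖ = 1) :
    ∃ f : bridge, ‖f‖ ≤ 4 ∧ ‖a - coeff f‖ ≤ 1 / 2 := by
  have hs : HasSum (fun n => lp.single 2 n (a n)) a := lp.hasSum_single (by simp) a
  obtain ⟨s, hsε⟩ := ((Metric.tendsto_nhds.1 hs) (1 / 8) (by norm_num)).exists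
  let g : bridge := ∑ n ∈ s, a n • ((2 : ℝ) • sinB n)
  have hg : coeff g = ∑ n ∈ s, lp.single 2 n (a n) := by
    rw [map_sum]
    refine Finset.sum_congr rfl fun n _ => ?_
    rw [map_smul, coeff_sinB, ← lp.single_smul, smul_eq_mul, mul_one]
  have hga : ∀ x : I, (g : C(I, ℝ)) x = 2 * ∑ n ∈ s, a n * sinR n x := fun x => by
    simp only [g, Submodule.coe_sum, ContinuousMap.coe_sum, Finset.sum_apply, Finset.mul_sum]
    refine Finset.sum_congr rfl fun n _ => ?_
    change a n * (2 * sinR n x) = _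
    ring
  have hσ : ∑ n ∈ s, a n ^ 2 ≤ 1 := by
    have := sum_le_hasSum s (fun _ _ => sq_nonneg _) (ellTwo_hasSum_sq a)
    rwa [ha, one_pow] at this
  have hσ0 : 0 ≤ ∑ n ∈ s, a n ^ 2 := Finset.sum_nonneg fun _ _ => sq_nonneg _
  have hu : ‖coeff (g - clampB g)‖ ≤ 3 / 8 := by
    refine abs_le_of_sq_le_sq' ?_ (by norm_num) |>.2
    refine (norm_coeffₗ_sq_le _).trans ?_
    have h : ∫ x in (0 : ℝ)..1, lineExt (g - clampB g) x ^ 2 ≤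
        ∫ x in (0 : ℝ)..1, (1 / 16) * (∑ n ∈ s, a n * sinR n x) ^ 4 := by
      refine intervalIntegral.integral_mono_on zero_le_one
        (Continuous.intervalIntegrable (by fun_prop) _ _)
        (Continuous.intervalIntegrable (by fun_prop) _ _) fun x hx => ?_
      rw [lineExt_of_mem _ hx]
      refine (abs_sub_clamp_le ((g : C(I, ℝ)) ⟨x, hx⟩)).trans (le_of_eq ?_)
      rw [hga]
      ring
    rw [intervalIntegral.integral_const_mul] at h
    have hk := (khinchine a s).2
    nlinarith
  refine ⟨clampB g, ?_, ?_⟩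
  · refine (ContinuousMap.norm_le _ (by norm_num)).2 fun x => ?_
    change |max (-4) (min 4 ((g : C(I, ℝ)) x))| ≤ 4
    rw [abs_le]
    exact ⟨le_max_left _ _, max_le (by norm_num) (min_le_left _ _)⟩
  · have e : a - coeff (clampB g) = (a - coeff g) + coeff (g - clampB g) := by
      rw [map_sub]; abel
    rw [e]
    refine (norm_add_le _ _).trans ?_
    rw [dist_comm, dist_eq_norm, ← hg] at hsε
    linarith

theorem coeff_approx (a : ellTwo) :
    ∃ f : bridge, ‖f‖ ≤ 4 * ‖a‖ ∧ ‖a - coeff f‖ ≤ ‖a‖ / 2 := by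
  rcases eq_or_ne a 0 with rfl | h
  · exact ⟨0, by simp, by simp⟩
  have hp : 0 < ‖a‖ := norm_pos_iff.2 h
  obtain ⟨f, hf, hf'⟩ := coeff_approx_unit (‖a‖⁻¹ • a) (by simp [norm_smul, hp.ne'])
  refine ⟨‖a‖ • f, ?_, ?_⟩
  · have e : ‖‖a‖ • f‖ = ‖a‖ * ‖f‖ := by
      change ‖‖a‖ • (f : C(I, ℝ))‖ = _
      rw [norm_smul, norm_norm]; rfl
    rw [e]; nlinarith
  · have e : a - coeff (‖a‖ • f) = ‖a‖ • (‖a‖⁻¹ • a - coeff f) := by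
      rw [map_smul, smul_sub, smul_smul, mul_inv_cancel₀ hp.ne', one_smul]
    rw [e, norm_smul, norm_norm]; nlinarith

/-! ### The weighted unit sphere -/

/-- The inclusion `I → ℝ` as a continuous function. -/
def idR : C(I, ℝ) := ⟨Subtype.val, continuous_subtype_val⟩

/-- The weighted norm `sup |x h(x)|`. -/
noncomputable def nu (h : bridge) : ℝ := ‖idR * (h : C(I, ℝ))‖

@[fun_prop]
theorem continuous_nu : Continuous nu := by
  unfold nu
  fun_prop

theorem nu_nonneg (h : bridge) : 0 ≤ nu h := norm_nonneg _

theorem nu_smul (c : ℝ) (h : bridge) : nu (c • h) = |c| * nu h := by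
  unfold nu
  rw [Submodule.coe_smul, mul_smul_comm, norm_smul, Real.norm_eq_abs]

theorem nu_zero : nu 0 = 0 := by simp [nu]

theorem abs_nu_sub_le (g h : bridge) : |nu g - nu h| ≤ nu (g - h) := by
  unfold nu
  rw [Submodule.coe_sub, mul_sub]
  exact abs_norm_sub_norm_le _ _

theorem nu_sub_comm (g h : bridge) : nu (g - h) = nu (h - g) := by
  unfold nu
  rw [Submodule.coe_sub, Submodule.coe_sub, mul_sub, mul_sub, norm_sub_rev]

theorem nu_sub_le (g h : bridge) : nu (g - h) ≤ nu g + nu h := by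
  unfold nu
  rw [Submodule.coe_sub, mul_sub]
  exact norm_sub_le _ _

theorem le_nu (h : bridge) (x : I) : (x : ℝ) * |(h : C(I, ℝ)) x| ≤ nu h := by
  have := (idR * (h : C(I, ℝ))).norm_coe_le_norm x
  rw [ContinuousMap.mul_apply, norm_mul, Real.norm_eq_abs, Real.norm_eq_abs] at this
  rwa [show idR x = (x : ℝ) from rfl, abs_of_nonneg x.2.1] at this

theorem nu_le {h : bridge} {C : ℝ} (hC : 0 ≤ C) (H : ∀ x : I, (x : ℝ) * |(h : C(I, ℝ)) x| ≤ C) :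
    nu h ≤ C := by
  refine (ContinuousMap.norm_le _ hC).2 fun x => ?_
  rw [ContinuousMap.mul_apply, norm_mul, Real.norm_eq_abs, Real.norm_eq_abs,
    show idR x = (x : ℝ) from rfl, abs_of_nonneg x.2.1]
  exact H x

theorem eq_zero_of_nu {h : bridge} (hh : nu h = 0) : h = 0 := by
  ext x
  have h1 := le_nu h x
  rw [hh] at h1
  change (h : C(I, ℝ)) x = 0
  by_cases hx : (x : ℝ) = 0
  · have : x = 0 := Subtype.ext hx
    rw [this]; exact h.2.1
  · have hp : 0 < (x : ℝ) := lt_of_le_of_ne x.2.1 (Ne.symm hx)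
    have h2 : |(h : C(I, ℝ)) x| ≤ 0 := by
      by_contra hc
      push Not at hc
      nlinarith [mul_pos hp hc]
    exact abs_eq_zero.1 (le_antisymm h2 (abs_nonneg _))

theorem nu_pos {h : bridge} (hh : h ≠ 0) : 0 < nu h :=
  lt_of_le_of_ne (nu_nonneg h) fun e => hh (eq_zero_of_nu e.symm)

/-- A curve in `H` parametrized by `t > 0`: it vanishes for `t ≥ 1`, and as `t → 0` it is
`ν`-Cauchy but tends pointwise on `(0, 1]` to `(1 - x)² / 2`, which does not extend to an element
of `H`. -/
noncomputable def path (t : ℝ) : bridge :=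
  ⟨⟨fun x => (1 - x) / 2 * max 0 (min 1 (x / t) - x), by fun_prop⟩, by simp, by simp⟩

theorem path_apply (t : ℝ) (x : I) :
    (path t : C(I, ℝ)) x = (1 - x) / 2 * max 0 (min 1 (x / t) - x) := rfl

theorem path_eq_zero {t : ℝ} (ht : 1 ≤ t) : path t = 0 := by
  ext x
  change (1 - x) / 2 * max 0 (min 1 (x / t) - x) = (0 : ℝ)
  have : (x : ℝ) / t ≤ x := div_le_self x.2.1 ht
  rw [max_eq_left, mul_zero]
  linarith [min_le_right 1 ((x : ℝ) / t)]

theorem continuousAt_path {t : ℝ} (ht : 0 < t) : ContinuousAt path t := by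
  have : ContinuousOn path (Set.Ioi 0) := by
    rw [continuousOn_iff_continuous_domRestrict]
    refine Continuous.subtype_mk (ContinuousMap.continuous_of_continuous_uncurry _ ?_) _
    change Continuous fun q : Set.Ioi (0 : ℝ) × I =>
      (1 - (q.2 : ℝ)) / 2 * max 0 (min 1 ((q.2 : ℝ) / (q.1 : ℝ)) - q.2)
    have h : ∀ q : Set.Ioi (0 : ℝ) × I, (q.1 : ℝ) ≠ 0 := fun q => (Set.mem_Ioi.1 q.1.2).ne'
    have h1 : Continuous fun q : Set.Ioi (0 : ℝ) × I => ((q.2 : ℝ) / (q.1 : ℝ)) :=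
      Continuous.div (by fun_prop) (by fun_prop) h
    fun_prop
  exact this.continuousAt (Ioi_mem_nhds ht)

theorem nu_path_sub_le {t s : ℝ} (ht : 0 < t) (hs : 0 < s) :
    nu (path t - path s) ≤ |t - s| / 2 := by
  wlog hts : t ≤ s generalizing t s
  · rw [nu_sub_comm, abs_sub_comm]
    exact this hs ht (le_of_not_ge hts)
  rw [abs_sub_comm, abs_of_nonneg (sub_nonneg.2 hts)]
  refine nu_le (by linarith) fun x => ?_
  have e : ((path t - path s : bridge) : C(I, ℝ)) x =
      (1 - x) / 2 * (max 0 (min 1 (x / t) - x) - max 0 (min 1 (x / s) - x)) := by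
    rw [Submodule.coe_sub, ContinuousMap.sub_apply, path_apply, path_apply]; ring
  obtain ⟨h0, h1⟩ := x.2
  rw [e, abs_mul, abs_of_nonneg (by linarith : (0 : ℝ) ≤ (1 - x) / 2)]
  have k1 : |max 0 (min 1 ((x : ℝ) / t) - x) - max 0 (min 1 ((x : ℝ) / s) - x)| ≤
      |min 1 ((x : ℝ) / t) - min 1 ((x : ℝ) / s)| := by
    refine (abs_max_sub_max_le_max _ _ _ _).trans ?_
    simp
  have k2 : (x : ℝ) * |min 1 ((x : ℝ) / t) - min 1 ((x : ℝ) / s)| ≤ s - t := by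
    have hxs : (x : ℝ) / s ≤ x / t := div_le_div_of_nonneg_left h0 ht hts
    rw [abs_of_nonneg (sub_nonneg.2 (min_le_min_left 1 hxs))]
    rcases le_total (x : ℝ) t with h | h
    · rw [min_eq_right ((div_le_one ht).2 h), min_eq_right ((div_le_one hs).2 (h.trans hts))]
      have : (x : ℝ) * (x / t - x / s) = (x / t) * (x / s) * (s - t) := by field_simp
      rw [this]
      have a1 := (div_le_one ht).2 h
      have a2 := (div_le_one hs).2 (h.trans hts)
      have a3 : 0 ≤ (x : ℝ) / t := by positivity
      have a4 : 0 ≤ (x : ℝ) / s := by positivity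
      nlinarith [mul_le_one₀ a1 a4 a2]
    · rw [min_eq_left ((one_le_div ht).2 h)]
      rcases le_total (x : ℝ) s with h' | h'
      · rw [min_eq_right ((div_le_one hs).2 h')]
        have : (x : ℝ) * (1 - x / s) = (x / s) * (s - x) := by field_simp
        rw [this]
        have a2 := (div_le_one hs).2 h'
        have a4 : 0 ≤ (x : ℝ) / s := by positivity
        nlinarith
      · rw [min_eq_left ((one_le_div hs).2 h')]
        simpa using hts
  calc (x : ℝ) * ((1 - x) / 2 * _) ≤
        (x : ℝ) * ((1 - x) / 2 * |min 1 ((x : ℝ) / t) - min 1 ((x : ℝ) / s)|) := by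
        have : (0 : ℝ) ≤ (1 - x) / 2 := by linarith
        gcongr
    _ = (1 - x) / 2 * (x * |min 1 ((x : ℝ) / t) - min 1 ((x : ℝ) / s)|) := by ring
    _ ≤ (1 / 2) * (s - t) := by
        gcongr
        linarith
    _ = (s - t) / 2 := by ring

/-- Surjectivity of `x ↦ x + path (ν x)` from `H \ {0}` onto `H`: the preimage of `y` is
`y - path t`, where `t` solves `ν (y - path t) = t`. Such a `t` exists by the intermediate value
theorem. -/
theorem exists_tau (y : bridge) : ∃ t, 0 < t ∧ nu (y - path t) = t := by
  have hy0 : (y : C(I, ℝ)) 0 = 0 := y.2.1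
  obtain ⟨δ, hδ, hδ4, hyδ⟩ : ∃ δ : I, 0 < (δ : ℝ) ∧ (δ : ℝ) ≤ 1 / 4 ∧
      |(y : C(I, ℝ)) δ| < 1 / 8 := by
    have hc : Continuous fun x : ℝ => |(y : C(I, ℝ)) (Set.projIcc 0 1 zero_le_one x)| := by fun_prop
    have h0 : |(y : C(I, ℝ)) (Set.projIcc 0 1 zero_le_one 0)| < 1 / 8 := by
      rw [Set.projIcc_left]
      change |(y : C(I, ℝ)) 0| < _
      rw [hy0]; norm_num
    have h1 := (hc.continuousAt (x := 0)).eventually (gt_mem_nhds h0)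
    obtain ⟨ε, hε, h⟩ := Metric.eventually_nhds_iff.1 h1
    have hm : min (ε / 2) (1 / 4) ∈ I :=
      ⟨by positivity, (min_le_right _ _).trans (by norm_num)⟩
    refine ⟨⟨min (ε / 2) (1 / 4), hm⟩, by positivity, min_le_right _ _, ?_⟩
    have := h (y := min (ε / 2) (1 / 4)) (by
      rw [Real.dist_eq, sub_zero, abs_of_nonneg hm.1]
      linarith [min_le_left (ε / 2) (1 / 4)])
    rwa [Set.projIcc_of_mem zero_le_one hm] at this
  -- Near `0` the function `y` is small whereas `path t` comes close to `1/2` for small `t`; hence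
  -- `ν (y - path t) ≥ t` for `t = δ / 8`.
  have hlow : (δ : ℝ) / 8 ≤ nu (y - path (δ / 8)) := by
    refine le_trans ?_ (le_nu _ δ)
    have e : (path (δ / 8) : C(I, ℝ)) δ = (1 - δ) / 2 * (1 - δ) := by
      rw [path_apply, min_eq_left, max_eq_right]
      · linarith
      · rw [one_le_div (by positivity)]; linarith
    rw [Submodule.coe_sub, ContinuousMap.sub_apply, e]
    have : (1 : ℝ) / 8 ≤ |(y : C(I, ℝ)) δ - (1 - δ) / 2 * (1 - δ)| := by
      rw [abs_sub_comm]
      refine le_trans ?_ (le_abs_self _)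
      have := (abs_lt.1 hyδ).2
      nlinarith
    nlinarith
  have hd : (δ : ℝ) / 8 ≤ nu y + 1 := by linarith [nu_nonneg y]
  have hcont : ContinuousOn (fun t => nu (y - path t) - t) (Set.Icc (δ / 8 : ℝ) (nu y + 1)) := by
    intro t ht
    have hp := continuousAt_path (lt_of_lt_of_le (by positivity) ht.1 : 0 < t)
    have : ContinuousAt (fun t => nu (y - path t)) t :=
      continuous_nu.continuousAt.comp (continuousAt_const.sub hp)
    exact (this.sub continuousAt_id).continuousWithinAt
  have hend : nu (y - path (nu y + 1)) - (nu y + 1) ≤ 0 := by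
    rw [path_eq_zero (by linarith [nu_nonneg y]), sub_zero]; linarith
  obtain ⟨t, ht, he⟩ := intermediate_value_Icc' hd hcont ⟨hend, by linarith⟩
  exact ⟨t, lt_of_lt_of_le (by positivity) ht.1, by simpa [sub_eq_zero] using he⟩

/-- The `ν`-size of the preimage of `y` under `x ↦ x + path (ν x)`; it is unique by
`abs_tau_le`. -/
noncomputable def tau (y : bridge) : ℝ := (exists_tau y).choose

theorem tau_pos (y : bridge) : 0 < tau y := (exists_tau y).choose_spec.1

theorem nu_sub_path_tau (y : bridge) : nu (y - path (tau y)) = tau y := (exists_tau y).choose_spec.2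

/-- Uniqueness and `ν`-Lipschitz dependence on `y` of the solution `t` of `ν (y - path t) = t`; this
is where the Lipschitz constant `1/2` of `path` is used. -/
theorem abs_tau_le {y z : bridge} {t s : ℝ} (ht : 0 < t) (hs : 0 < s) (hy : nu (y - path t) = t)
    (hz : nu (z - path s) = s) : |t - s| ≤ 2 * nu (y - z) := by
  have h1 := abs_nu_sub_le (y - path t) (z - path s)
  have h2 : nu (y - path t - (z - path s)) ≤ nu (y - z) + nu (path t - path s) := by
    rw [sub_sub_sub_comm]
    exact nu_sub_le _ _
  have h3 := nu_path_sub_le ht hs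
  rw [hy, hz] at h1
  linarith

theorem tau_eq {y : bridge} {t : ℝ} (ht : 0 < t) (h : nu (y - path t) = t) : tau y = t := by
  have := abs_tau_le (tau_pos y) ht (nu_sub_path_tau y) h
  rw [sub_self, nu_zero, mul_zero] at this
  exact sub_eq_zero.1 (abs_eq_zero.1 (le_antisymm this (abs_nonneg _)))

theorem tau_eq_nu {y : bridge} (h : 1 ≤ nu y) : tau y = nu y :=
  tau_eq (by linarith) (by rw [path_eq_zero h, sub_zero])

theorem tau_add_path {x : bridge} (hx : x ≠ 0) : tau (x + path (nu x)) = nu x :=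
  tau_eq (nu_pos hx) (by rw [add_sub_cancel_right])

theorem continuous_tau : Continuous tau := by
  rw [continuous_iff_continuousAt]
  intro y
  unfold ContinuousAt
  rw [tendsto_iff_norm_sub_tendsto_zero]
  have hc : Continuous fun z => 2 * nu (z - y) := by fun_prop
  have hl := hc.tendsto y
  simp only [sub_self, nu_zero, mul_zero] at hl
  exact squeeze_zero (fun _ => norm_nonneg _)
    (fun z => abs_tau_le (tau_pos z) (tau_pos y) (nu_sub_path_tau z) (nu_sub_path_tau y)) hl

/-- The unit sphere of `ℝ × H` for the norm `√(a² + ν(h)²)`, with the sup-norm topology of `H`. -/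
abbrev TSphere : Type := {q : ℝ × bridge // q.1 ^ 2 + nu q.2 ^ 2 = 1}

open Classical in
/-- The homeomorphism from the sphere to `H`: stereographic projection from the pole `(1, 0)`, then
removal of the point `0` by `y ↦ y - path (tau y)`, then inversion in the `ν`-unit sphere. The
`else` branch only concerns the pole; its formula is valid on the whole open upper half-sphere
(`toBridge_of_pos`), which gives continuity at the pole. -/
noncomputable def toBridge (q : TSphere) : bridge :=
  if q.1.1 < 1 then
    (tau ((1 - q.1.1)⁻¹ • q.1.2) ^ 2)⁻¹ •
      ((1 - q.1.1)⁻¹ • q.1.2 - path (tau ((1 - q.1.1)⁻¹ • q.1.2)))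
  else (1 + q.1.1)⁻¹ • q.1.2

theorem toBridge_of_lt {q : TSphere} (h : q.1.1 < 1) : toBridge q =
    (tau ((1 - q.1.1)⁻¹ • q.1.2) ^ 2)⁻¹ •
      ((1 - q.1.1)⁻¹ • q.1.2 - path (tau ((1 - q.1.1)⁻¹ • q.1.2))) := by
  unfold toBridge; rw [if_pos h]

theorem nu_sq_of_lt {q : TSphere} (h : q.1.1 < 1) :
    nu ((1 - q.1.1)⁻¹ • q.1.2) ^ 2 = (1 + q.1.1) / (1 - q.1.1) := by
  have h1 : 0 < 1 - q.1.1 := by linarith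
  rw [nu_smul, mul_pow, sq_abs, eq_div_iff h1.ne']
  have h2 := q.2
  have h3 : nu q.1.2 ^ 2 = (1 + q.1.1) * (1 - q.1.1) := by linarith
  rw [h3]
  field_simp

/-- On the upper half-sphere the stereographic projection has `ν`-norm at least `1`, so `path`
contributes nothing and `toBridge` is the stereographic projection from the opposite pole. -/
theorem toBridge_of_pos {q : TSphere} (h : 0 < q.1.1) : toBridge q = (1 + q.1.1)⁻¹ • q.1.2 := by
  by_cases hlt : q.1.1 < 1
  · have h1 : 0 < 1 - q.1.1 := by linarith
    have hn := nu_sq_of_lt hlt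
    have h1n : 1 ≤ nu ((1 - q.1.1)⁻¹ • q.1.2) := by
      refine (one_le_sq_iff₀ (nu_nonneg _)).1 ?_
      rw [hn, one_le_div h1]; linarith
    rw [toBridge_of_lt hlt, tau_eq_nu h1n, path_eq_zero h1n, sub_zero, hn, smul_smul]
    congr 1
    field_simp
  · unfold toBridge; rw [if_neg hlt]

theorem continuous_toBridge : Continuous toBridge := by
  have cfst : Continuous fun q : TSphere => q.1.1 := continuous_fst.comp continuous_subtype_val
  have csnd : Continuous fun q : TSphere => q.1.2 := continuous_snd.comp continuous_subtype_val
  rw [continuous_iff_continuousAt]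
  intro q
  by_cases hlt : q.1.1 < 1
  · have h1 : 1 - q.1.1 ≠ 0 := by linarith
    have ev : toBridge =ᶠ[𝓝 q] fun q => (tau ((1 - q.1.1)⁻¹ • q.1.2) ^ 2)⁻¹ •
        ((1 - q.1.1)⁻¹ • q.1.2 - path (tau ((1 - q.1.1)⁻¹ • q.1.2))) := by
      filter_upwards [cfst.continuousAt.eventually (gt_mem_nhds hlt)] with z hz
      exact toBridge_of_lt hz
    refine ContinuousAt.congr ?_ ev.symm
    have cy : ContinuousAt (fun q : TSphere => (1 - q.1.1)⁻¹ • q.1.2) q :=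
      ((continuous_const.sub cfst).continuousAt.inv₀ h1).smul csnd.continuousAt
    have ct : ContinuousAt (fun q : TSphere => tau ((1 - q.1.1)⁻¹ • q.1.2)) q :=
      ContinuousAt.comp' (g := tau) continuous_tau.continuousAt cy
    have cp : ContinuousAt (fun q : TSphere => path (tau ((1 - q.1.1)⁻¹ • q.1.2))) q :=
      ContinuousAt.comp' (g := path) (continuousAt_path (tau_pos _)) ct
    exact ((ct.pow 2).inv₀ (pow_ne_zero 2 (tau_pos _).ne')).smul (cy.sub cp)
  · have hpos : 0 < q.1.1 := by linarith
    have ev : toBridge =ᶠ[𝓝 q] fun q => (1 + q.1.1)⁻¹ • q.1.2 := by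
      filter_upwards [cfst.continuousAt.eventually (lt_mem_nhds hpos)] with z hz
      exact toBridge_of_pos hz
    refine ContinuousAt.congr ?_ ev.symm
    have h1 : 1 + q.1.1 ≠ 0 := by linarith
    exact ((continuous_const.add cfst).continuousAt.inv₀ h1).smul csnd.continuousAt

/-- The inverse of stereographic projection from the pole `(1, 0)`. -/
noncomputable def stereo (y : bridge) : TSphere :=
  ⟨((nu y ^ 2 - 1) / (nu y ^ 2 + 1), (2 / (nu y ^ 2 + 1)) • y), by
    have : 0 < nu y ^ 2 + 1 := by positivity
    change ((nu y ^ 2 - 1) / (nu y ^ 2 + 1)) ^ 2 + nu ((2 / (nu y ^ 2 + 1)) • y) ^ 2 = 1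
    rw [nu_smul, abs_of_pos (by positivity)]
    field_simp
    ring⟩

theorem continuous_stereo : Continuous stereo := by
  refine Continuous.subtype_mk ?_ _
  have : ∀ y : bridge, nu y ^ 2 + 1 ≠ 0 := fun y => by positivity
  exact (Continuous.div (by fun_prop) (by fun_prop) this).prodMk
    ((Continuous.div (by fun_prop) (by fun_prop) this).smul continuous_id)

/-- The pole `(1, 0)` of the sphere. -/
noncomputable def pole : TSphere := ⟨(1, 0), by simp [nu_zero]⟩

/-- Inversion in the `ν`-unit sphere; the junk value of `0⁻¹` makes it fix `0`. -/
noncomputable def inversion (w : bridge) : bridge := (nu w ^ 2)⁻¹ • w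

theorem nu_inversion (w : bridge) : nu (inversion w) = (nu w)⁻¹ := by
  unfold inversion
  rw [nu_smul, abs_of_nonneg (by positivity)]
  rcases eq_or_ne (nu w) 0 with h | h
  · simp [h]
  · field_simp

theorem inversion_inversion (w : bridge) : inversion (inversion w) = w := by
  rcases eq_or_ne w 0 with rfl | h
  · simp [inversion]
  have hp := nu_pos h
  rw [inversion, nu_inversion, inversion, smul_smul]
  have : ((nu w)⁻¹ ^ 2)⁻¹ * (nu w ^ 2)⁻¹ = 1 := by field_simp
  rw [this, one_smul]

theorem inversion_ne_zero {w : bridge} (h : w ≠ 0) : inversion w ≠ 0 :=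
  fun e => h (by rw [← inversion_inversion w, e]; simp [inversion])

open Classical in
/-- The inverse of `toBridge`. -/
noncomputable def ofBridge (w : bridge) : TSphere :=
  if w = 0 then pole else stereo (inversion w + path (nu (inversion w)))

theorem ofBridge_of_ne {w : bridge} (h : w ≠ 0) :
    ofBridge w = stereo (inversion w + path (nu (inversion w))) := if_neg h

/-- Near `0` the curve `path` contributes nothing, which gives continuity of `ofBridge` at `0`. -/
theorem ofBridge_of_lt {w : bridge} (h : nu w < 1) : (ofBridge w).1 =
    ((1 - nu w ^ 2) / (1 + nu w ^ 2), (2 / (1 + nu w ^ 2)) • w) := by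
  rcases eq_or_ne w 0 with rfl | h0
  · unfold ofBridge
    rw [if_pos rfl]
    simp [nu_zero, pole]
  · have hp := nu_pos h0
    have h1 : 1 ≤ nu (inversion w) := by
      rw [nu_inversion]; exact (one_le_inv₀ hp).2 h.le
    rw [ofBridge_of_ne h0, path_eq_zero h1, add_zero]
    refine Prod.ext ?_ ?_
    · change (nu (inversion w) ^ 2 - 1) / (nu (inversion w) ^ 2 + 1) = _
      rw [nu_inversion]
      field_simp
    · change (2 / (nu (inversion w) ^ 2 + 1)) • inversion w = _
      rw [nu_inversion, inversion, smul_smul]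
      congr 1
      field_simp

theorem continuous_ofBridge : Continuous ofBridge := by
  rw [continuous_iff_continuousAt]
  intro w
  rcases eq_or_ne w 0 with rfl | h0
  · refine tendsto_subtype_rng.2 ?_
    change ContinuousAt (fun w => (ofBridge w).1) 0
    have ev : (fun w => (ofBridge w).1) =ᶠ[𝓝 0] fun w =>
        ((1 - nu w ^ 2) / (1 + nu w ^ 2), (2 / (1 + nu w ^ 2)) • w) := by
      have : nu (0 : bridge) < 1 := by rw [nu_zero]; norm_num
      filter_upwards [continuous_nu.continuousAt.eventually (gt_mem_nhds this)] with z hz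
      exact ofBridge_of_lt hz
    refine ContinuousAt.congr ?_ ev.symm
    have : ∀ y : bridge, 1 + nu y ^ 2 ≠ 0 := fun y => by positivity
    exact ((Continuous.div (by fun_prop) (by fun_prop) this).prodMk
      ((Continuous.div (by fun_prop) (by fun_prop) this).smul continuous_id)).continuousAt
  · have ev : ofBridge =ᶠ[𝓝 w] fun w => stereo (inversion w + path (nu (inversion w))) := by
      filter_upwards [isOpen_ne.mem_nhds h0] with z hz
      exact ofBridge_of_ne hz
    refine ContinuousAt.congr ?_ ev.symm
    have ci : ContinuousAt inversion w :=
      ((continuous_nu.continuousAt.pow 2).inv₀ (pow_ne_zero 2 (nu_pos h0).ne')).smul continuousAt_id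
    have cn : ContinuousAt (fun w => nu (inversion w)) w :=
      ContinuousAt.comp' (g := nu) continuous_nu.continuousAt ci
    have cp : ContinuousAt (fun w => path (nu (inversion w))) w :=
      ContinuousAt.comp' (g := path) (continuousAt_path (nu_pos (inversion_ne_zero h0))) cn
    exact ContinuousAt.comp' (g := stereo) continuous_stereo.continuousAt (ci.add cp)

/-- The weighted sphere is homeomorphic to the Banach space `H`. -/
noncomputable def sphereHomeo : TSphere ≃ₜ bridge where
  toFun := toBridge
  invFun := ofBridge
  continuous_toFun := continuous_toBridge
  continuous_invFun := continuous_ofBridge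
  left_inv q := by
    by_cases hlt : q.1.1 < 1
    · have h1 : 0 < 1 - q.1.1 := by linarith
      have hn := nu_sq_of_lt hlt
      rw [toBridge_of_lt hlt]
      set y := (1 - q.1.1)⁻¹ • q.1.2 with hy
      have e : (tau y ^ 2)⁻¹ • (y - path (tau y)) = inversion (y - path (tau y)) := by
        rw [inversion, nu_sub_path_tau]
      have hx : y - path (tau y) ≠ 0 := fun h => by
        have h2 := nu_sub_path_tau y
        rw [h, nu_zero] at h2
        exact (tau_pos y).ne h2
      rw [e, ofBridge_of_ne (inversion_ne_zero hx), inversion_inversion, nu_sub_path_tau,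
        sub_add_cancel]
      refine Subtype.ext (Prod.ext ?_ ?_)
      · change (nu y ^ 2 - 1) / (nu y ^ 2 + 1) = q.1.1
        rw [hn]
        have : (1 + q.1.1) / (1 - q.1.1) + 1 = 2 / (1 - q.1.1) := by field_simp; ring
        rw [this]
        field_simp
        ring
      · change (2 / (nu y ^ 2 + 1)) • y = q.1.2
        rw [hn, hy, smul_smul]
        have : (1 + q.1.1) / (1 - q.1.1) + 1 = 2 / (1 - q.1.1) := by field_simp; ring
        rw [this]
        have : 2 / (2 / (1 - q.1.1)) * (1 - q.1.1)⁻¹ = 1 := by field_simp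
        rw [this, one_smul]
    · have hq := q.2
      have h1 : q.1.1 = 1 := by nlinarith [sq_nonneg (nu q.1.2), not_lt.1 hlt]
      have h2 : q.1.2 = 0 := by
        rw [h1] at hq
        exact eq_zero_of_nu (pow_eq_zero_iff two_ne_zero |>.1 (by linarith))
      have : q = pole := Subtype.ext (Prod.ext h1 h2)
      rw [this, toBridge_of_pos (by simp [pole])]
      have e : ((1 + pole.1.1)⁻¹ • pole.1.2 : bridge) = 0 := smul_zero _
      rw [e, ofBridge, if_pos rfl]
  right_inv w := by
    rcases eq_or_ne w 0 with rfl | h0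
    · have : ofBridge 0 = pole := by unfold ofBridge; rw [if_pos rfl]
      rw [this, toBridge_of_pos (by simp [pole])]
      simp [pole]
    · rw [ofBridge_of_ne h0]
      set y := inversion w + path (nu (inversion w)) with hy
      have ht : tau y = nu (inversion w) := tau_add_path (inversion_ne_zero h0)
      have hp : 0 < nu y ^ 2 + 1 := by positivity
      have hlt : (stereo y).1.1 < 1 := by
        change (nu y ^ 2 - 1) / (nu y ^ 2 + 1) < 1
        rw [div_lt_one hp]; linarith
      have e : (1 - (stereo y).1.1)⁻¹ • (stereo y).1.2 = y := by
        change (1 - (nu y ^ 2 - 1) / (nu y ^ 2 + 1))⁻¹ • ((2 / (nu y ^ 2 + 1)) • y) = y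
        have e1 : 1 - (nu y ^ 2 - 1) / (nu y ^ 2 + 1) = 2 / (nu y ^ 2 + 1) := by
          field_simp; ring
        rw [e1, smul_smul, inv_mul_cancel₀ (by positivity), one_smul]
      rw [toBridge_of_lt hlt, e, ht, hy, add_sub_cancel_right]
      exact inversion_inversion w

/-! ### Surjections as points of the sphere -/

/-- The maximum of `g`. -/
noncomputable def maxv (g : C(I, ℝ)) : ℝ := sSup (g '' Set.univ)

/-- The minimum of `g`. -/
noncomputable def minv (g : C(I, ℝ)) : ℝ := sInf (g '' Set.univ)

@[fun_prop]
theorem continuous_maxv : Continuous maxv :=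
  isCompact_univ.continuous_sSup (f := fun (g : C(I, ℝ)) x => g x) (by fun_prop)

@[fun_prop]
theorem continuous_minv : Continuous minv :=
  isCompact_univ.continuous_sInf (f := fun (g : C(I, ℝ)) x => g x) (by fun_prop)

theorem maxv_eq {g : C(I, ℝ)} {M : ℝ} (h : ∀ x, g x ≤ M) (x : I) (hx : g x = M) : maxv g = M :=
  IsGreatest.csSup_eq ⟨⟨x, trivial, hx⟩, by rintro _ ⟨y, _, rfl⟩; exact h y⟩

theorem minv_eq {g : C(I, ℝ)} {m : ℝ} (h : ∀ x, m ≤ g x) (x : I) (hx : g x = m) : minv g = m :=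
  IsLeast.csInf_eq ⟨⟨x, trivial, hx⟩, by rintro _ ⟨y, _, rfl⟩; exact h y⟩

theorem exists_maxv (g : C(I, ℝ)) : ∃ x, g x = maxv g ∧ ∀ y, g y ≤ g x := by
  obtain ⟨x, -, hx⟩ := isCompact_univ.exists_isMaxOn Set.univ_nonempty g.continuous.continuousOn
  have hx' : ∀ y, g y ≤ g x := fun y => hx (Set.mem_univ y)
  exact ⟨x, (maxv_eq hx' x rfl).symm, hx'⟩

theorem exists_minv (g : C(I, ℝ)) : ∃ x, g x = minv g ∧ ∀ y, g x ≤ g y := by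
  obtain ⟨x, -, hx⟩ := isCompact_univ.exists_isMinOn Set.univ_nonempty g.continuous.continuousOn
  have hx' : ∀ y, g x ≤ g y := fun y => hx (Set.mem_univ y)
  exact ⟨x, (minv_eq hx' x rfl).symm, hx'⟩

theorem le_maxv (g : C(I, ℝ)) (y : I) : g y ≤ maxv g := by
  obtain ⟨x, hx, h⟩ := exists_maxv g; rw [← hx]; exact h y

theorem minv_le (g : C(I, ℝ)) (y : I) : minv g ≤ g y := by
  obtain ⟨x, hx, h⟩ := exists_minv g; rw [← hx]; exact h y

/-- The total increment `f 1 - f 0`. -/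
noncomputable def rise (f : C(I, I)) : ℝ := (f 1 : ℝ) - f 0

/-- The difference between `f` and the affine function with the same end values. -/
noncomputable def bridgePart (f : C(I, I)) : bridge :=
  ⟨⟨fun x => (f x : ℝ) - f 0 - rise f * x, by fun_prop⟩, by simp, by simp [rise]⟩

theorem bridgePart_apply (f : C(I, I)) (x : I) :
    (bridgePart f : C(I, ℝ)) x = (f x : ℝ) - f 0 - rise f * x := rfl

theorem continuous_rise : Continuous rise := by unfold rise; fun_prop

theorem continuous_bridgePart : Continuous bridgePart := by
  refine Continuous.subtype_mk (ContinuousMap.continuous_of_continuous_uncurry _ ?_) _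
  have := continuous_rise
  change Continuous fun q : C(I, I) × I => (q.1 q.2 : ℝ) - q.1 0 - rise q.1 * q.2
  fun_prop

/-- The norm `√(a² + ν(h)²)` of the pair `(rise f, bridgePart f)`. -/
noncomputable def size (f : C(I, I)) : ℝ := √(rise f ^ 2 + nu (bridgePart f) ^ 2)

theorem continuous_size : Continuous size := by
  have := continuous_rise
  have := continuous_bridgePart
  unfold size
  fun_prop

theorem size_pos {f : C(I, I)} (hf : f ∈ SurjSet) : 0 < size f := by
  refine Real.sqrt_pos.2 ?_
  by_contra hc
  have h1 : rise f = 0 := by nlinarith [sq_nonneg (rise f), sq_nonneg (nu (bridgePart f))]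
  have h2 : nu (bridgePart f) = 0 := by
    nlinarith [sq_nonneg (rise f), sq_nonneg (nu (bridgePart f))]
  have h3 := eq_zero_of_nu h2
  have h4 : ∀ x, f x = f 0 := fun x => by
    have := bridgePart_apply f x
    rw [h3, h1] at this
    simp only [zero_mul, sub_zero] at this
    exact Subtype.ext (sub_eq_zero.1 this.symm)
  obtain ⟨x, hx⟩ := hf 0
  obtain ⟨y, hy⟩ := hf 1
  have : (0 : I) = 1 := by rw [← hx, ← hy, h4 x, h4 y]
  exact zero_ne_one this

/-- The function `a x + h(x)` attached to `(a, h) ∈ ℝ × H`. -/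
noncomputable def lineAdd (q : ℝ × bridge) : C(I, ℝ) := q.1 • idR + (q.2 : C(I, ℝ))

theorem lineAdd_apply (q : ℝ × bridge) (x : I) :
    lineAdd q x = q.1 * x + (q.2 : C(I, ℝ)) x := rfl

@[fun_prop]
theorem continuous_lineAdd : Continuous lineAdd := by unfold lineAdd; fun_prop

theorem minv_lt_maxv (q : TSphere) : minv (lineAdd q.1) < maxv (lineAdd q.1) := by
  by_contra hc
  have h : ∀ x, lineAdd q.1 x = 0 := fun x => by
    have h0 : lineAdd q.1 0 = 0 := by
      rw [lineAdd_apply, q.1.2.2.1]; simp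
    have := le_maxv (lineAdd q.1) x
    have := minv_le (lineAdd q.1) x
    have := le_maxv (lineAdd q.1) 0
    have := minv_le (lineAdd q.1) 0
    linarith
  have h1 : q.1.1 = 0 := by
    have := h 1
    rw [lineAdd_apply, q.1.2.2.2] at this
    simpa using this
  have h2 : q.1.2 = 0 := by
    ext x
    have := h x
    rw [lineAdd_apply, h1] at this
    simpa using this
  have := q.2
  rw [h1, h2, nu_zero] at this
  norm_num at this

theorem rescale_mem (q : TSphere) (x : I) :
    (lineAdd q.1 x - minv (lineAdd q.1)) / (maxv (lineAdd q.1) - minv (lineAdd q.1)) ∈ I := by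
  have h := minv_lt_maxv q
  have h1 := le_maxv (lineAdd q.1) x
  have h2 := minv_le (lineAdd q.1) x
  exact ⟨div_nonneg (by linarith) (by linarith), (div_le_one (by linarith)).2 (by linarith)⟩

/-- The affine rescaling of `a x + h(x)` with minimum `0` and maximum `1`. -/
noncomputable def rescale (q : TSphere) : C(I, I) :=
  ⟨fun x => ⟨(lineAdd q.1 x - minv (lineAdd q.1)) / (maxv (lineAdd q.1) - minv (lineAdd q.1)),
    rescale_mem q x⟩, by fun_prop⟩

theorem rescale_apply (q : TSphere) (x : I) : (rescale q x : ℝ) =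
    (lineAdd q.1 x - minv (lineAdd q.1)) / (maxv (lineAdd q.1) - minv (lineAdd q.1)) := rfl

theorem rescale_mem_surjSet (q : TSphere) : rescale q ∈ SurjSet := by
  intro y
  have h := sub_pos.2 (minv_lt_maxv q)
  obtain ⟨x0, h0, -⟩ := exists_minv (lineAdd q.1)
  obtain ⟨x1, h1, -⟩ := exists_maxv (lineAdd q.1)
  refine mem_range_of_exists_le_of_exists_ge (rescale q).continuous ⟨x0, ?_⟩ ⟨x1, ?_⟩
  · have : rescale q x0 = 0 := Subtype.ext (by rw [rescale_apply, h0]; simp)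
    rw [this]; exact y.2.1
  · have : rescale q x1 = 1 := Subtype.ext (by rw [rescale_apply, h1]; simp [h.ne'])
    rw [this]; exact y.2.2

theorem continuous_rescale : Continuous rescale := by
  refine ContinuousMap.continuous_of_continuous_uncurry _ ?_
  refine Continuous.subtype_mk ?_ _
  change Continuous fun p : TSphere × I =>
    (lineAdd p.1.1 p.2 - minv (lineAdd p.1.1)) / (maxv (lineAdd p.1.1) - minv (lineAdd p.1.1))
  refine Continuous.div (by fun_prop) (by fun_prop) fun p => ?_
  exact (sub_pos.2 (minv_lt_maxv p.1)).ne.symm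

/-- Normalizing `(rise f, bridgePart f)` identifies `S(I)` with the sphere. -/
noncomputable def surjHomeo : SurjSet ≃ₜ TSphere where
  toFun f := ⟨((size f.1)⁻¹ * rise f.1, (size f.1)⁻¹ • bridgePart f.1), by
    have hp := size_pos f.2
    have hs : size f.1 ^ 2 = rise f.1 ^ 2 + nu (bridgePart f.1) ^ 2 :=
      Real.sq_sqrt (by positivity)
    change ((size f.1)⁻¹ * rise f.1) ^ 2 + nu ((size f.1)⁻¹ • bridgePart f.1) ^ 2 = 1
    rw [nu_smul, mul_pow, mul_pow, sq_abs, ← mul_add, ← hs]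
    field_simp⟩
  invFun q := ⟨rescale q, rescale_mem_surjSet q⟩
  left_inv f := by
    obtain ⟨f, hf⟩ := f
    refine Subtype.ext (ContinuousMap.ext fun x => Subtype.ext ?_)
    simp only [rescale_apply]
    have hp := size_pos hf
    set g := lineAdd ((size f)⁻¹ * rise f, (size f)⁻¹ • bridgePart f) with hg
    have hgx : ∀ x, g x = (size f)⁻¹ * (f x - f 0) := fun x => by
      rw [hg, lineAdd_apply]
      change (size f)⁻¹ * rise f * x + (size f)⁻¹ * ((f x : ℝ) - f 0 - rise f * x) = _
      ring
    have hp' : 0 < (size f)⁻¹ := inv_pos.2 hp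
    obtain ⟨x0, h0⟩ := hf 0
    obtain ⟨x1, h1⟩ := hf 1
    have hmax : maxv g = (size f)⁻¹ * (1 - f 0) :=
      maxv_eq (fun x => by rw [hgx]; have := (f x).2.2; gcongr) x1 (by rw [hgx, h1]; rfl)
    have hmin : minv g = (size f)⁻¹ * (0 - f 0) :=
      minv_eq (fun x => by rw [hgx]; have := (f x).2.1; gcongr) x0 (by rw [hgx, h0]; rfl)
    rw [hgx, hmax, hmin]
    field_simp
    ring
  right_inv q := by
    set d := maxv (lineAdd q.1) - minv (lineAdd q.1) with hd
    have hd0 : 0 < d := sub_pos.2 (minv_lt_maxv q)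
    have e0 : lineAdd q.1 0 = 0 := by rw [lineAdd_apply, q.1.2.2.1]; simp
    have e1 : lineAdd q.1 1 = q.1.1 := by rw [lineAdd_apply, q.1.2.2.2]; simp
    have hs : rise (rescale q) = d⁻¹ * q.1.1 := by
      rw [rise, rescale_apply, rescale_apply, e0, e1, ← hd]
      field_simp
      ring
    have hb : bridgePart (rescale q) = d⁻¹ • q.1.2 := by
      ext x
      change (bridgePart (rescale q) : C(I, ℝ)) x = d⁻¹ * (q.1.2 : C(I, ℝ)) x
      rw [bridgePart_apply, hs, rescale_apply, rescale_apply, e0, ← hd, lineAdd_apply]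
      field_simp
      ring
    have hn : size (rescale q) = d⁻¹ := by
      have h := q.2
      rw [size, hs, hb, nu_smul, mul_pow, mul_pow, sq_abs, ← mul_add, h, mul_one,
        Real.sqrt_sq (inv_pos.2 hd0).le]
    refine Subtype.ext (Prod.ext ?_ ?_)
    · change (size (rescale q))⁻¹ * rise (rescale q) = q.1.1
      rw [hn, hs]
      field_simp
    · change (size (rescale q))⁻¹ • bridgePart (rescale q) = q.1.2
      rw [hn, hb, smul_smul, inv_mul_cancel₀ (inv_pos.2 hd0).ne', one_smul]
  continuous_toFun := by
    refine Continuous.subtype_mk ?_ _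
    have hi : Continuous fun f : SurjSet => (size f.1)⁻¹ :=
      (continuous_size.comp continuous_subtype_val).inv₀ fun f => (size_pos f.2).ne'
    exact (hi.mul (continuous_rise.comp continuous_subtype_val)).prodMk
      (hi.smul (continuous_bridgePart.comp continuous_subtype_val))
  continuous_invFun := continuous_rescale.subtype_mk _

/-! ### Decomposition argument -/

/-- `ℓ₂` absorbs every separable Banach space as a topological factor. -/
theorem absorb_separable (F : Type*) [NormedAddCommGroup F] [NormedSpace ℝ F] [CompleteSpace F]
    [SecondCountableTopology F] : Nonempty (F × ellTwo ≃ₜ ellTwo) := by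
  obtain ⟨T, hT⟩ := exists_ellOne_quotient F
  obtain ⟨s, hs, hTs, C, hC, hb⟩ := exists_continuous_section T 1 zero_le_one hT
  obtain ⟨e⟩ := absorb T s hs hTs C hC hb
  obtain ⟨m⟩ := mazur
  exact ⟨((Homeomorph.refl F).prodCongr m.symm).trans (e.trans m)⟩

/-- A continuous section of `q` splits the domain as a topological product with the kernel, via
`x ↦ (q x, x - s (q x))`. -/
theorem split_of_section {E F : Type*} [NormedAddCommGroup E] [NormedSpace ℝ E]
    [NormedAddCommGroup F] [NormedSpace ℝ F] (q : E →L[ℝ] F) (s : F → E) (hs : Continuous s)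
    (hqs : ∀ y, q (s y) = y) : Nonempty (E ≃ₜ F × LinearMap.ker (q : E →ₗ[ℝ] F)) := by
  refine ⟨{ toFun := fun x => (q x, ⟨x - s (q x), by simp [hqs]⟩)
            invFun := fun p => s p.1 + p.2
            left_inv := fun x => by simp
            right_inv := fun p => ?_
            continuous_toFun := ?_
            continuous_invFun := by fun_prop }⟩
  · have h : q (p.2 : E) = 0 := p.2.2
    refine Prod.ext ?_ (Subtype.ext ?_) <;> simp [hqs, h]
  · exact q.continuous.prodMk (Continuous.subtype_mk (by fun_prop) _)

theorem bridge_homeo_ellTwo : Nonempty (bridge ≃ₜ ellTwo) := by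
  obtain ⟨s, hs, hqs, -⟩ := @exists_continuous_section bridge ellTwo _ _ _ _ _ coeff 4
    (by norm_num) fun y => by
      obtain ⟨f, h1, h2⟩ := coeff_approx y
      exact ⟨f, h1, h2⟩
  obtain ⟨e⟩ := @split_of_section bridge ellTwo _ _ _ _ coeff s hs hqs
  have hsurj : Function.Surjective coeff := fun y => ⟨s y, hqs y⟩
  have : TopologicalSpace.SeparableSpace ellTwo :=
    hsurj.denseRange.separableSpace coeff.continuous
  have : SecondCountableTopology ellTwo := UniformSpace.secondCountable_of_separable ellTwo
  obtain ⟨a⟩ := absorb_separable ellTwo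
  obtain ⟨b⟩ := absorb_separable bridge
  -- `H ≃ ℓ₂ × K ≃ (ℓ₂ × ℓ₂) × K ≃ ℓ₂ × H ≃ ℓ₂`, where `K` is the kernel of `coeff`.
  exact ⟨e.trans <| (a.symm.prodCongr (Homeomorph.refl _)).trans <|
    (Homeomorph.prodAssoc _ _ _).trans <| ((Homeomorph.refl _).prodCongr e.symm).trans <|
    (Homeomorph.prodComm _ _).trans b⟩

theorem surjSet_homeomorphic_to_l2 :
    Nonempty (↥SurjSet ≃ₜ ↥(lp (fun _ : ℕ => ℝ) 2)) := by
  obtain ⟨e⟩ := bridge_homeo_ellTwo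
  exact ⟨(surjHomeo.trans sphereHomeo).trans e⟩
end

section
/- The subspace C(I) \ Const(I) of non-constant continuous self-maps of I is homeomorphic to the product △ × S(I), where △ = {(a,b) ∈ I² : a < b}; an explicit homeomorphism is f ↦ ((min f, max f), h_{(min f, max f)} ∘ f) with h_{(a,b)}(x) = (x − a)/(b − a). -/
/-!
A non-constant `f : C(I, I)` attains its extreme values `m < M`, so its range is the interval
`[m, M]` by the intermediate value theorem and `(f - m) / (M - m)` is a surjection of `I`. Conversely,
given `a < b` and a surjection `g`, the map `a + (b - a) g` has minimum `a` and maximum `b`, so the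
two constructions are inverse to each other. Both are continuous: `minVal` and `maxVal` are
1-Lipschitz for the supremum metric (`abs_minVal_sub_le`, `abs_maxVal_sub_le`), and a map into
`C(I, I)` is continuous as soon as its uncurried form is jointly continuous.
-/

open unitInterval

/-- `Const(I)`: the set of constant self-maps of the unit interval. -/
def ConstSet : Set C(I, I) := {f | ∃ c : I, ∀ x : I, f x = c}

/-- `△ = {(a, b) ∈ I² : a < b}`. -/
def TriSet : Set (I × I) := {p | (p.1 : ℝ) < (p.2 : ℝ)}

/-- The minimum value of `f ∈ C(I, I)`, as a real number. -/
noncomputable def minVal (f : C(I, I)) : ℝ := sInf (Set.range fun x : I => (f x : ℝ))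

/-- The maximum value of `f ∈ C(I, I)`, as a real number. -/
noncomputable def maxVal (f : C(I, I)) : ℝ := sSup (Set.range fun x : I => (f x : ℝ))

lemma isLeast_minVal (f : C(I, I)) : IsLeast (Set.range fun x : I => (f x : ℝ)) (minVal f) :=
  (isCompact_range (by fun_prop)).isLeast_sInf (Set.range_nonempty _)

lemma isGreatest_maxVal (f : C(I, I)) : IsGreatest (Set.range fun x : I => (f x : ℝ)) (maxVal f) :=
  (isCompact_range (by fun_prop)).isGreatest_sSup (Set.range_nonempty _)

lemma minVal_le (f : C(I, I)) (x : I) : minVal f ≤ f x := (isLeast_minVal f).2 ⟨x, rfl⟩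

lemma le_maxVal (f : C(I, I)) (x : I) : (f x : ℝ) ≤ maxVal f := (isGreatest_maxVal f).2 ⟨x, rfl⟩

lemma exists_eq_minVal (f : C(I, I)) : ∃ x, (f x : ℝ) = minVal f := (isLeast_minVal f).1

lemma exists_eq_maxVal (f : C(I, I)) : ∃ x, (f x : ℝ) = maxVal f := (isGreatest_maxVal f).1

lemma minVal_mem (f : C(I, I)) : minVal f ∈ I := by
  obtain ⟨x, hx⟩ := exists_eq_minVal f
  exact hx ▸ (f x).2

lemma maxVal_mem (f : C(I, I)) : maxVal f ∈ I := by
  obtain ⟨x, hx⟩ := exists_eq_maxVal f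
  exact hx ▸ (f x).2

lemma minVal_lt_maxVal {f : C(I, I)} (hf : f ∈ ConstSetᶜ) : minVal f < maxVal f := by
  by_contra! h
  refine hf ⟨f 0, fun x => Subtype.ext ?_⟩
  linarith [minVal_le f x, minVal_le f 0, le_maxVal f x, le_maxVal f 0]

lemma abs_apply_sub_le (f g : C(I, I)) (x : I) : |(f x : ℝ) - g x| ≤ dist f g :=
  ContinuousMap.dist_apply_le_dist (f := f) (g := g) x

lemma abs_minVal_sub_le (f g : C(I, I)) : |minVal f - minVal g| ≤ dist f g := by
  obtain ⟨x, hx⟩ := exists_eq_minVal f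
  obtain ⟨y, hy⟩ := exists_eq_minVal g
  have h1 := abs_le.1 (abs_apply_sub_le f g x)
  have h2 := abs_le.1 (abs_apply_sub_le f g y)
  rw [abs_le]
  constructor <;> linarith [minVal_le f y, minVal_le g x]

lemma abs_maxVal_sub_le (f g : C(I, I)) : |maxVal f - maxVal g| ≤ dist f g := by
  obtain ⟨x, hx⟩ := exists_eq_maxVal f
  obtain ⟨y, hy⟩ := exists_eq_maxVal g
  have h1 := abs_le.1 (abs_apply_sub_le f g x)
  have h2 := abs_le.1 (abs_apply_sub_le f g y)
  rw [abs_le]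
  constructor <;> linarith [le_maxVal f y, le_maxVal g x]

lemma continuous_minVal : Continuous minVal :=
  (LipschitzWith.of_dist_le_mul (K := 1) fun f g => by
    simpa [Real.dist_eq] using abs_minVal_sub_le f g).continuous

lemma continuous_maxVal : Continuous maxVal :=
  (LipschitzWith.of_dist_le_mul (K := 1) fun f g => by
    simpa [Real.dist_eq] using abs_maxVal_sub_le f g).continuous

lemma normalize_mem {f : C(I, I)} (hf : f ∈ ConstSetᶜ) (x : I) :
    ((f x : ℝ) - minVal f) / (maxVal f - minVal f) ∈ I := by
  have h := sub_pos.2 (minVal_lt_maxVal hf)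
  exact ⟨div_nonneg (by linarith [minVal_le f x]) h.le,
    (div_le_one h).2 (by linarith [le_maxVal f x])⟩

/-- The normalization `(f - min f) / (max f - min f)` of a non-constant map `f`. -/
noncomputable def normalizeMap (f : ↥ConstSetᶜ) : C(I, I) where
  toFun x := ⟨((f.1 x : ℝ) - minVal f.1) / (maxVal f.1 - minVal f.1), normalize_mem f.2 x⟩
  continuous_toFun := by fun_prop

lemma normalizeMap_mem (f : ↥ConstSetᶜ) : normalizeMap f ∈ SurjSet := by
  have h := sub_pos.2 (minVal_lt_maxVal f.2)
  obtain ⟨x, hx⟩ := exists_eq_minVal f.1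
  obtain ⟨y, hy⟩ := exists_eq_maxVal f.1
  intro z
  refine mem_range_of_exists_le_of_exists_ge (normalizeMap f).continuous ⟨x, ?_⟩ ⟨y, ?_⟩
  · rw [← Subtype.coe_le_coe]
    simpa [normalizeMap, hx] using z.2.1
  · rw [← Subtype.coe_le_coe]
    simpa [normalizeMap, hy, div_self h.ne'] using z.2.2

lemma continuous_normalizeMap : Continuous normalizeMap := by
  refine ContinuousMap.continuous_of_continuous_uncurry _ (Continuous.subtype_mk ?_ _)
  have hm : Continuous fun p : ↥ConstSetᶜ × I => minVal p.1.1 :=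
    continuous_minVal.comp (by fun_prop)
  have hM : Continuous fun p : ↥ConstSetᶜ × I => maxVal p.1.1 :=
    continuous_maxVal.comp (by fun_prop)
  have he : Continuous fun p : ↥ConstSetᶜ × I => (p.1.1 p.2 : ℝ) := by fun_prop
  exact (he.sub hm).div (hM.sub hm) fun p => (sub_pos.2 (minVal_lt_maxVal p.1.2)).ne'

lemma stretch_mem {p : I × I} (hp : p ∈ TriSet) (t : I) :
    (p.1 : ℝ) + (p.2 - p.1) * t ∈ I := by
  have h := sub_pos.2 (show (p.1 : ℝ) < p.2 from hp)
  constructor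
  · have := mul_nonneg h.le t.2.1
    linarith [p.1.2.1]
  · have := mul_le_mul_of_nonneg_left t.2.2 h.le
    linarith [p.2.2.2]

/-- The map `a + (b - a) g` attached to `a < b` and a surjection `g`. -/
noncomputable def stretchMap (q : ↥TriSet × ↥SurjSet) : C(I, I) where
  toFun x := ⟨(q.1.1.1 : ℝ) + (q.1.1.2 - q.1.1.1) * q.2.1 x, stretch_mem q.1.2 _⟩
  continuous_toFun := by fun_prop

lemma continuous_stretchMap : Continuous stretchMap := by
  refine ContinuousMap.continuous_of_continuous_uncurry _ (Continuous.subtype_mk ?_ _)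
  fun_prop

lemma minVal_stretchMap (q : ↥TriSet × ↥SurjSet) : minVal (stretchMap q) = q.1.1.1 := by
  have h := sub_pos.2 (show (q.1.1.1 : ℝ) < q.1.1.2 from q.1.2)
  obtain ⟨x, hx⟩ := q.2.2 0
  refine IsLeast.csInf_eq ⟨⟨x, by simp [stretchMap, hx]⟩, ?_⟩
  rintro _ ⟨y, rfl⟩
  have := mul_nonneg h.le (q.2.1 y).2.1
  simp only [stretchMap, ContinuousMap.coe_mk]
  linarith

lemma maxVal_stretchMap (q : ↥TriSet × ↥SurjSet) : maxVal (stretchMap q) = q.1.1.2 := by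
  have h := sub_pos.2 (show (q.1.1.1 : ℝ) < q.1.1.2 from q.1.2)
  obtain ⟨x, hx⟩ := q.2.2 1
  refine IsGreatest.csSup_eq ⟨⟨x, by simp [stretchMap, hx]⟩, ?_⟩
  rintro _ ⟨y, rfl⟩
  have := mul_le_mul_of_nonneg_left (q.2.1 y).2.2 h.le
  simp only [stretchMap, ContinuousMap.coe_mk]
  linarith

lemma stretchMap_mem (q : ↥TriSet × ↥SurjSet) : stretchMap q ∈ ConstSetᶜ := by
  rintro ⟨c, hc⟩
  obtain ⟨x, hx⟩ := exists_eq_minVal (stretchMap q)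
  obtain ⟨y, hy⟩ := exists_eq_maxVal (stretchMap q)
  have h : (q.1.1.1 : ℝ) < q.1.1.2 := q.1.2
  rw [hc, minVal_stretchMap] at hx
  rw [hc, maxVal_stretchMap] at hy
  linarith

/-- The homeomorphism `f ↦ ((min f, max f), (f - min f) / (max f - min f))`, with inverse
`((a, b), g) ↦ a + (b - a) g`. -/
noncomputable def nonConstHomeo : ↥ConstSetᶜ ≃ₜ ↥TriSet × ↥SurjSet where
  toFun f := (⟨(⟨minVal f.1, minVal_mem _⟩, ⟨maxVal f.1, maxVal_mem _⟩), minVal_lt_maxVal f.2⟩,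
    ⟨normalizeMap f, normalizeMap_mem f⟩)
  invFun q := ⟨stretchMap q, stretchMap_mem q⟩
  left_inv f := by
    have h := (sub_pos.2 (minVal_lt_maxVal f.2)).ne'
    ext x
    simp only [stretchMap, normalizeMap, ContinuousMap.coe_mk]
    rw [mul_div_cancel₀ _ h]
    ring
  right_inv q := by
    have h := (sub_pos.2 (show (q.1.1.1 : ℝ) < q.1.1.2 from q.1.2)).ne'
    refine Prod.ext (Subtype.ext (Prod.ext (Subtype.ext ?_) (Subtype.ext ?_)))
      (Subtype.ext (ContinuousMap.ext fun x => Subtype.ext ?_))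
    · exact minVal_stretchMap q
    · exact maxVal_stretchMap q
    · simp only [normalizeMap, ContinuousMap.coe_mk, minVal_stretchMap, maxVal_stretchMap]
      simp only [stretchMap, ContinuousMap.coe_mk]
      rw [add_sub_cancel_left, mul_div_cancel_left₀ _ h]
  continuous_toFun := by
    refine Continuous.prodMk (Continuous.subtype_mk (Continuous.prodMk ?_ ?_) _)
      (continuous_normalizeMap.subtype_mk _)
    · exact (continuous_minVal.comp continuous_subtype_val).subtype_mk _
    · exact (continuous_maxVal.comp continuous_subtype_val).subtype_mk _
  continuous_invFun := continuous_stretchMap.subtype_mk _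

/-- `C(I) \ Const(I)` is homeomorphic to `△ × S(I)` via the explicit homeomorphism
`f ↦ ((min f, max f), h_{(min f, max f)} ∘ f)` where `h_{(a,b)}(x) = (x − a)/(b − a)`. -/
theorem nonConst_homeomorphic_triangle_prod_surjSet :
    ∃ H : ↥ConstSetᶜ ≃ₜ ↥TriSet × ↥SurjSet,
      ∀ f : ↥ConstSetᶜ,
        (((H f).1 : I × I).1 : ℝ) = minVal (f : C(I, I)) ∧
        (((H f).1 : I × I).2 : ℝ) = maxVal (f : C(I, I)) ∧
        ∀ x : I, (((H f).2 : C(I, I)) x : ℝ) =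
          (((f : C(I, I)) x : ℝ) - minVal (f : C(I, I))) /
            (maxVal (f : C(I, I)) - minVal (f : C(I, I))) := by
  exact ⟨nonConstHomeo, fun _ => ⟨rfl, rfl, fun _ => rfl⟩⟩
end

section
/- The set cl T(I) is nowhere dense in S(I): for every surjective continuous map g : I → I and every ε > 0 there exists a surjective continuous map h : I → I with d(g,h) < ε and h ∉ cl T(I); equivalently, cl T(I) has empty interior in the subspace topology of S(I). -/
/-!
Every `g ∈ C(I, I)` has a fixed point `p`. Precompose `g` with a surjection `φ` of `I` that is
uniformly close to the identity and collapses a whole neighbourhood `[p - δ, p + δ]` to `p`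
(`exists_collapse`). The map `h = g ∘ φ` is again surjective, is close to `g` by uniform continuity,
and is constantly `p` on `[p - δ, p + δ]`. Hence any `f` with `d(f, h) < δ` maps
the ball `B(p, δ)` into itself, so no orbit starting there meets the complementary open set
`{x | δ < |x - p|}`, and `f` is not transitive (`not_isTransitiveMap_of_trapping`).
Working with `g ∘ φ`, rather than altering the values of `g` near `p`, is what preserves
surjectivity.
-/

open unitInterval

/-- The collapse `φ` scales the displacement `x - p` by the factor
`min 1 (max 0 (|x - p| / δ - 1))`, which is `0` for `|x - p| ≤ δ` and `1` for `2δ ≤ |x - p|`. -/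
lemma exists_collapse (p : I) {η : ℝ} (hη : 0 < η) :
    ∃ δ : ℝ, 0 < δ ∧ δ ≤ 1 / 3 ∧ ∃ φ : C(I, I), Function.Surjective φ ∧
      (∀ x, dist (φ x) x < η) ∧ ∀ x, dist x p ≤ δ → φ x = p := by
  have hp0 : (0 : ℝ) ≤ p := p.2.1
  have hp1 : (p : ℝ) ≤ 1 := p.2.2
  -- `δ` is so small that each endpoint of `I` is either `p` itself or at distance `≥ 2δ` from `p`.
  obtain ⟨δ, hδ, hδ3, hδη, hδ0, hδ1⟩ : ∃ δ : ℝ, 0 < δ ∧ δ ≤ 1 / 3 ∧ 2 * δ < η ∧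
      ((p : ℝ) = 0 ∨ 2 * δ ≤ p) ∧ ((p : ℝ) = 1 ∨ 2 * δ ≤ 1 - p) := by
    rcases hp0.eq_or_lt with h0 | h0
    · refine ⟨min (1 / 3) (η / 3), by positivity, min_le_left _ _, ?_, Or.inl h0.symm, Or.inr ?_⟩
      · linarith [min_le_right (1 / 3) (η / 3)]
      · linarith [min_le_left (1 / 3) (η / 3)]
    · rcases hp1.eq_or_lt with h1 | h1
      · refine ⟨min (1 / 3) (η / 3), by positivity, min_le_left _ _, ?_, Or.inr ?_, Or.inl h1⟩
        · linarith [min_le_right (1 / 3) (η / 3)]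
        · linarith [min_le_left (1 / 3) (η / 3)]
      · have h1' : 0 < 1 - (p : ℝ) := by linarith
        have ha := min_le_left (min (p : ℝ) (1 - p)) η
        have hb := min_le_right (min (p : ℝ) (1 - p)) η
        have hc := min_le_left (p : ℝ) (1 - p)
        have hd := min_le_right (p : ℝ) (1 - p)
        have he : 0 < min (min (p : ℝ) (1 - p)) η := lt_min (lt_min h0 h1') hη
        refine ⟨min (min (p : ℝ) (1 - p)) η / 3, by linarith, ?_, ?_, Or.inr ?_, Or.inr ?_⟩ <;>
          linarith
  set w : ℝ → ℝ := fun t => min 1 (max 0 (|t| / δ - 1)) with hw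
  have hw0 : ∀ t, 0 ≤ w t := fun t => le_min zero_le_one (le_max_left _ _)
  have hw1 : ∀ t, w t ≤ 1 := fun t => min_le_left _ _
  have hwsmall : ∀ t, |t| ≤ δ → w t = 0 := by
    intro t ht
    have : |t| / δ ≤ 1 := (div_le_one hδ).2 ht
    simp only [hw]
    rw [max_eq_left (by linarith), min_eq_right zero_le_one]
  have hwbig : ∀ t, 2 * δ ≤ |t| → w t = 1 := by
    intro t ht
    have : 2 ≤ |t| / δ := (le_div_iff₀ hδ).2 ht
    simp only [hw]
    rw [max_eq_right (by linarith), min_eq_left (by linarith)]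
  have hwc : Continuous w := by fun_prop
  let F : I → ℝ := fun x => (p : ℝ) + w (x - p) * (x - p)
  have hFc : Continuous F := by fun_prop
  have hFm : ∀ x, F x ∈ I := by
    intro x
    have hx0 : (0 : ℝ) ≤ x := x.2.1
    have hx1 : (x : ℝ) ≤ 1 := x.2.2
    have h0 := hw0 (x - p)
    have h1 := hw1 (x - p)
    constructor <;> simp only [F] <;> nlinarith
  refine ⟨δ, hδ, hδ3, ⟨fun x => ⟨F x, hFm x⟩, by fun_prop⟩, ?_, ?_, ?_⟩
  · have h0 : F 0 = 0 := by
      rcases hδ0 with h | h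
      · simp [F, h]
      · simp only [F]
        rw [hwbig]
        · simp
        · simpa [abs_of_nonneg hp0] using h
    have h1 : F 1 = 1 := by
      rcases hδ1 with h | h
      · simp [F, h]
      · simp only [F]
        rw [hwbig]
        · simp
        · rw [Set.Icc.coe_one, abs_of_nonneg (by linarith)]
          exact h
    intro y
    refine mem_range_of_exists_le_of_exists_ge (ContinuousMap.continuous _) ⟨0, ?_⟩ ⟨1, ?_⟩
    · exact Subtype.coe_le_coe.1 (h0.le.trans y.2.1)
    · exact Subtype.coe_le_coe.1 (y.2.2.trans h1.ge)
  · intro x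
    rw [Subtype.dist_eq, Real.dist_eq]
    change |F x - x| < η
    by_cases hx : 2 * δ ≤ |(x : ℝ) - p|
    · simp only [F]
      rw [hwbig _ hx]
      simpa using hη
    · have h0 := hw0 (x - p)
      have h1 := hw1 (x - p)
      have : F x - x = -((1 - w (x - p)) * (x - p)) := by simp only [F]; ring
      rw [this, abs_neg, abs_mul, abs_of_nonneg (by linarith)]
      nlinarith [abs_nonneg ((x : ℝ) - p)]
  · intro x hx
    rw [Subtype.dist_eq, Real.dist_eq] at hx
    apply Subtype.ext
    change F x = p
    simp [F, hwsmall _ hx]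

lemma not_isTransitiveMap_of_trapping {f : C(I, I)} {p : I} {δ : ℝ} (hδ : 0 < δ)
    (hδ3 : δ ≤ 1 / 3) (hf : ∀ x, dist x p < δ → dist (f x) p < δ) : ¬ IsTransitiveMap f := by
  intro hT
  have hV : {x : I | δ < dist x p}.Nonempty := by
    -- The endpoints are at distance `1 > 2δ`, so they cannot both lie within `δ` of `p`.
    by_contra hne
    rw [Set.not_nonempty_iff_eq_empty, Set.eq_empty_iff_forall_notMem] at hne
    have h0 : dist (0 : I) p ≤ δ := not_lt.1 (hne 0)
    have h1 : dist (1 : I) p ≤ δ := not_lt.1 (hne 1)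
    have h01 : dist (0 : I) 1 = 1 := by simp [Subtype.dist_eq]
    linarith [dist_triangle_right (0 : I) 1 p]
  obtain ⟨n, -, x, hxU, hxV⟩ := hT (Metric.ball p δ) {x | δ < dist x p} Metric.isOpen_ball
    (isOpen_lt continuous_const (by fun_prop)) ⟨p, Metric.mem_ball_self hδ⟩ hV
  have hmaps : Set.MapsTo f (Metric.ball p δ) (Metric.ball p δ) := fun y hy => hf y hy
  exact lt_asymm (Metric.mem_ball.1 (hmaps.iterate n hxU)) hxV

lemma exists_surj_near_notMem_closure {g : C(I, I)} (hg : g ∈ SurjSet) {ε : ℝ} (hε : 0 < ε) :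
    ∃ h ∈ SurjSet, dist g h < ε ∧ h ∉ closure TransSet := by
  obtain ⟨p, hp⟩ : ∃ p : I, p = g p :=
    intermediate_value_univ₂ (a := (0 : I)) (b := 1) continuous_id g.continuous
      nonneg' le_one'
  obtain ⟨η, hη, hgη⟩ := Metric.uniformContinuous_iff.1
    (CompactSpace.uniformContinuous_of_continuous g.continuous) ε hε
  obtain ⟨δ, hδ, hδ3, φ, hφs, hφη, hφp⟩ := exists_collapse p hη
  refine ⟨g.comp φ, ?_, ?_, ?_⟩
  · change Function.Surjective (g ∘ φ)
    exact Function.Surjective.comp (show Function.Surjective g from hg) hφs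
  · rw [ContinuousMap.dist_lt_iff hε]
    intro x
    rw [dist_comm]
    exact hgη (hφη x)
  · rw [Metric.mem_closure_iff]
    intro hcl
    obtain ⟨f, hfT, hf⟩ := hcl δ hδ
    refine not_isTransitiveMap_of_trapping (p := p) hδ hδ3 (fun x hx => ?_) hfT
    have h1 : g.comp φ x = p := by
      rw [ContinuousMap.comp_apply, hφp x hx.le, ← hp]
    have h2 := (ContinuousMap.dist_lt_iff hδ).1 hf x
    rwa [h1, dist_comm] at h2

/-- `cl T(I)` is nowhere dense in `S(I)`: every surjection can be approximated by surjections
outside `cl T(I)`; equivalently, `cl T(I)` has empty interior in the subspace topology of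
`S(I)`. -/
theorem closure_transSet_nowhere_dense_in_surjSet :
    (∀ g ∈ SurjSet, ∀ ε > (0 : ℝ), ∃ h ∈ SurjSet,
      dist g h < ε ∧ h ∉ closure TransSet) ∧
    interior ((Subtype.val : ↥SurjSet → C(I, I)) ⁻¹' closure TransSet) = ∅ := by
  refine ⟨fun g hg ε hε => exists_surj_near_notMem_closure hg hε, ?_⟩
  rw [Set.eq_empty_iff_forall_notMem]
  intro g hg
  obtain ⟨ε, hε, hball⟩ := Metric.mem_nhds_iff.1 (mem_interior_iff_mem_nhds.1 hg)
  obtain ⟨h, hS, hd, hcl⟩ := exists_surj_near_notMem_closure g.2 hε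
  refine hcl (hball (a := ⟨h, hS⟩) ?_)
  rw [Metric.mem_ball, dist_comm]
  exact hd
end

section
/- Let f : I → I be the map f(x) = x². Then f is a continuous surjection from I onto I, but every g ∈ C(I) with d(f,g) < 1/100 is not transitive; in particular f does not belong to cl T(I). -/
/-!
Every map `g` within `1 / 100` of the squaring map sends `[0, 1/2]` into itself, since there
`g x < x ^ 2 + 1 / 100 ≤ 1 / 4 + 1 / 100`. No orbit starting in the open set `{x < 1/2}` can
therefore meet the open set `{x > 1/2}`, so `g` is not transitive. Thus the ball of radius
`1 / 100` around the squaring map contains no transitive map, and the squaring map lies outside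
the closure of the transitive maps. Surjectivity is witnessed by square roots.
-/

open unitInterval

/-- The map `x ↦ x²` as a continuous self-map of the unit interval. -/
noncomputable def sqMap : C(I, I) :=
  ⟨fun x => ⟨(x : ℝ) ^ 2, by
      constructor
      · positivity
      · nlinarith [x.2.1, x.2.2]⟩,
    by fun_prop⟩

/-- The interval `[0, 1/2]` is forward invariant under every small perturbation of the squaring
map. -/
theorem map_le_half {g : C(I, I)} (hg : dist sqMap g < 1 / 100) {x : I} (hx : (x : ℝ) ≤ 1 / 2) :
    (g x : ℝ) ≤ 1 / 2 := by
  have h : dist (sqMap x) (g x) < 1 / 100 := (ContinuousMap.dist_apply_le_dist x).trans_lt hg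
  rw [Subtype.dist_eq, Real.dist_eq] at h
  have hs : ((sqMap x : I) : ℝ) = (x : ℝ) ^ 2 := rfl
  rw [hs] at h
  have := (abs_lt.mp h).1
  nlinarith [x.2.1]

theorem not_transitive_of_dist_lt {g : C(I, I)} (hg : dist sqMap g < 1 / 100) :
    ¬ IsTransitiveMap g := by
  intro ht
  obtain ⟨n, -, x, hxU, hxV⟩ := ht {x : I | (x : ℝ) < 1 / 2} {x : I | 1 / 2 < (x : ℝ)}
    (isOpen_lt continuous_subtype_val continuous_const)
    (isOpen_lt continuous_const continuous_subtype_val)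
    ⟨0, by norm_num⟩ ⟨1, by norm_num⟩
  have hmaps : Set.MapsTo g {x : I | (x : ℝ) ≤ 1 / 2} {x : I | (x : ℝ) ≤ 1 / 2} :=
    fun _ hy => map_le_half hg hy
  have hle : ((g : I → I)^[n] x : ℝ) ≤ 1 / 2 := 
    hmaps.iterate n (show (x : ℝ) ≤ 1 / 2 from le_of_lt hxU)
  exact absurd hxV (not_lt.mpr hle)

theorem sqMap_surjective_not_near_transitive :
    Function.Surjective sqMap ∧
    (∀ g : C(I, I), dist sqMap g < 1 / 100 → ¬ IsTransitiveMap g) ∧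
    sqMap ∉ closure TransSet := by
  refine ⟨fun y => ?_, fun g hg => not_transitive_of_dist_lt hg, fun h => ?_⟩
  · exact ⟨⟨√(y : ℝ), Real.sqrt_nonneg _, Real.sqrt_le_one.mpr y.2.2⟩,
      Subtype.ext (Real.sq_sqrt y.2.1)⟩
  · obtain ⟨g, hgT, hg⟩ := Metric.mem_closure_iff.mp h (1 / 100) (by norm_num)
    exact not_transitive_of_dist_lt hg hgT
end
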